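/- arXiv:1512.05423 — 3 statements merged into one kernel-verified Lean document; each statement's English description precedes it below -/
import Mathlib

section
/- Let f^(n), n = 1, 2, …, be a sequence of log-concave probability density functions, f^(n) on ℝ^n, each with finite second moments, such that the second moments are uniformly bounded (i.e. there is M < ∞ with E[(X_k^n)²] ≤ M for all n and all coordinates k ∈ {1,…,n}, where X^n ∼ f^(n)) and such that every f^(n) is (c1,c2)-regular with constants c1 > 0, c2 ≥ 0 independent of n. Then there exists a finite constant c, independent of n, such that (1/n)·D(f^(n)) ≤ c for all n; in fact (1/n)·D(f^(n)) ≤ 2·c1·M + 2·c2·√M/√n for all n. -/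
open MeasureTheory Real ProbabilityTheory
open scoped BigOperators ENNReal

noncomputable section

/-- A probability density on `ℝⁿ` (Euclidean space): nonnegative, integrable, integrating to one. -/
def IsDensity {n : ℕ} (f : EuclideanSpace ℝ (Fin n) → ℝ) : Prop :=
  (∀ x, 0 ≤ f x) ∧ Integrable f ∧ (∫ x, f x) = 1

/-- `(c₁, c₂)`-regularity of a density (Polyanskiy–Wu): everywhere positive, differentiable,
and `‖∇ log f(x)‖ ≤ c₁‖x‖ + c₂`. -/
def IsRegularDensity {n : ℕ} (c₁ c₂ : ℝ) (f : EuclideanSpace ℝ (Fin n) → ℝ) : Prop :=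
  (∀ x, 0 < f x) ∧ Differentiable ℝ f ∧
    ∀ x : EuclideanSpace ℝ (Fin n),
      ‖gradient (fun y => Real.log (f y)) x‖ ≤ c₁ * ‖x‖ + c₂

/-- Kullback–Leibler divergence between two densities (natural logarithm). -/
def klDiv' {n : ℕ} (f g : EuclideanSpace ℝ (Fin n) → ℝ) : ℝ :=
  ∫ x, f x * Real.log (f x / g x)

/-- Mean vector of a density. -/
def meanVec {n : ℕ} (f : EuclideanSpace ℝ (Fin n) → ℝ) : Fin n → ℝ :=
  fun i => ∫ x, f x * x i

/-- Covariance matrix of a density. -/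
def covMat {n : ℕ} (f : EuclideanSpace ℝ (Fin n) → ℝ) : Matrix (Fin n) (Fin n) ℝ :=
  Matrix.of fun i j => ∫ x, f x * (x i - meanVec f i) * (x j - meanVec f j)

/-- The Gaussian density on `ℝⁿ` with mean vector `m` and covariance matrix `R`. -/
def gaussDensity {n : ℕ} (m : Fin n → ℝ) (R : Matrix (Fin n) (Fin n) ℝ)
    (x : EuclideanSpace ℝ (Fin n)) : ℝ :=
  (2 * π) ^ (-(n : ℝ) / 2) * R.det ^ (-(1 : ℝ) / 2) *
    Real.exp (-(1 / 2) * ∑ i, ∑ j, (x i - m i) * R⁻¹ i j * (x j - m j))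

/-- `D(f) = D(f ‖ g)` where `g` is the Gaussian density with the same mean vector and
covariance matrix as `f`. -/
def KLtoGauss {n : ℕ} (f : EuclideanSpace ℝ (Fin n) → ℝ) : ℝ :=
  klDiv' f (gaussDensity (meanVec f) (covMat f))

/-- The vector `(X_k, X_{k+1}, …, X_{k+n-1})` of a process, as a point of Euclidean space. -/
def pathVec {Ω : Type*} (X : ℕ → Ω → ℝ) (k n : ℕ) (ω : Ω) : EuclideanSpace ℝ (Fin n) :=
  (WithLp.equiv 2 (Fin n → ℝ)).symm fun i : Fin n => X (k + i) ω

/-- The centered isotropic Gaussian density on `ℝⁿ` with covariance `v • Iₙ`. -/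
def isoGaussDensity (n : ℕ) (v : ℝ) (x : EuclideanSpace ℝ (Fin n)) : ℝ :=
  (2 * π * v) ^ (-(n : ℝ) / 2) * Real.exp (-‖x‖ ^ 2 / (2 * v))

/-- Log-concavity of a nonnegative function. -/
def LogConcaveFn {n : ℕ} (f : EuclideanSpace ℝ (Fin n) → ℝ) : Prop :=
  ∀ x y : EuclideanSpace ℝ (Fin n), ∀ t : ℝ, 0 ≤ t → t ≤ 1 →
    f x ^ t * f y ^ (1 - t) ≤ f (t • x + (1 - t) • y)

/-- A zero-mean Gaussian random vector with covariance matrix `R`: every linear functional of it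
is a centered real Gaussian with the corresponding variance. -/
def IsCenteredGaussianVec {Ω : Type*} [MeasurableSpace Ω] {n : ℕ} (P : Measure Ω)
    (W : Ω → EuclideanSpace ℝ (Fin n)) (R : Matrix (Fin n) (Fin n) ℝ) : Prop :=
  ∀ a : Fin n → ℝ, Measure.map (fun ω => ∑ i, a i * W ω i) P
    = gaussianReal 0 (Real.toNNReal (∑ i, ∑ j, a i * R i j * a j))

/-- Hadamard (element-wise) product of two Euclidean vectors. -/
def hadamard {n : ℕ} (u v : EuclideanSpace ℝ (Fin n)) : EuclideanSpace ℝ (Fin n) :=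
  (WithLp.equiv 2 (Fin n → ℝ)).symm fun i => u i * v i

end

noncomputable section
open MeasureTheory Real ProbabilityTheory

/-!
Integrating the gradient bound along rays gives `|log f(x) - log f(0)| ≤ c₁‖x‖²/2 + c₂‖x‖`, so the
expectations of `log f` under two laws with the same second moment `V = E‖X‖²` differ by at most
`c₁ V + 2 c₂ √V`. Let `g` be the Gaussian density with the mean and covariance of `f`. The
expectation of `log g` depends only on mean and covariance, so Gibbs' inequality yields
`D(f ‖ g) = E_f[log f] - E_g[log g] ≤ E_f[log f] - E_g[log f] ≤ c₁ V + 2 c₂ √V`, and `V ≤ n M`.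
-/

section RadialGrowth

variable {E F : Type*} [NormedAddCommGroup E] [NormedSpace ℝ E]
  [NormedAddCommGroup F] [NormedSpace ℝ F]

lemma norm_sub_zero_le_of_norm_fderiv_le {φ : E → F} {a b : ℝ} (hφ : Differentiable ℝ φ)
    (hbound : ∀ x, ‖fderiv ℝ φ x‖ ≤ a * ‖x‖ + b) (x : E) :
    ‖φ x - φ 0‖ ≤ a / 2 * ‖x‖ ^ 2 + b * ‖x‖ := by
  have hray (t : ℝ) : HasDerivAt (fun t : ℝ => φ (t • x) - φ 0) (fderiv ℝ φ (t • x) x) t := by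
    have hline : HasDerivAt (fun t : ℝ => t • x) x t := by
      simpa using (hasDerivAt_id t).smul_const x
    exact ((hφ (t • x)).hasFDerivAt.comp_hasDerivAt t hline).sub_const (φ 0)
  have hmajorant (t : ℝ) : HasDerivAt (fun t : ℝ => a / 2 * ‖x‖ ^ 2 * t ^ 2 + b * ‖x‖ * t)
      ((a * (t * ‖x‖) + b) * ‖x‖) t := by
    refine (((hasDerivAt_pow 2 t).const_mul _).fun_add
      ((hasDerivAt_id t).const_mul _)).congr_deriv ?_
    push_cast
    ring
  have hderiv : ∀ t ∈ Set.Ico (0 : ℝ) 1,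
      ‖fderiv ℝ φ (t • x) x‖ ≤ (a * (t * ‖x‖) + b) * ‖x‖ := fun t ht => by
    refine (ContinuousLinearMap.le_opNorm _ x).trans ?_
    gcongr
    simpa only [norm_smul, norm_of_nonneg ht.1] using hbound (t • x)
  have hfence := image_norm_le_of_norm_deriv_right_le_deriv_boundary
    (fun t _ => (hray t).continuousAt.continuousWithinAt)
    (fun t _ => (hray t).hasDerivWithinAt) (by simp) hmajorant hderiv
    (Set.right_mem_Icc.2 zero_le_one)
  simpa using hfence

end RadialGrowth

section IntegralEstimates

variable {α : Type*} [MeasurableSpace α] {μ : Measure α}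

lemma integral_norm_le_sqrt_integral_norm_sq {E : Type*} [NormedAddCommGroup E]
    [IsProbabilityMeasure μ] {X : α → E} (hX : MemLp X 2 μ) :
    ∫ x, ‖X x‖ ∂μ ≤ √(∫ x, ‖X x‖ ^ 2 ∂μ) := by
  refine Real.le_sqrt_of_sq_le ?_
  have hvar := variance_nonneg (fun x => ‖X x‖) μ
  rw [variance_eq_sub hX.norm] at hvar
  simpa using hvar

lemma variance_pos_of_continuous [TopologicalSpace α] [OpensMeasurableSpace α]
    [IsFiniteMeasure μ] [μ.IsOpenPosMeasure] {X : α → ℝ} (hX : Continuous X) (hX2 : MemLp X 2 μ)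
    {u v : α} (huv : X u ≠ X v) : 0 < Var[X; μ] := by
  refine (variance_nonneg X μ).lt_of_ne fun hvar => huv ?_
  have hconst : X =ᵐ[μ] fun _ => μ[X] := by
    rw [← evariance_eq_zero_iff hX.aemeasurable, ← hX2.ofReal_variance_eq, ← hvar,
      ENNReal.ofReal_zero]
  rw [(hX.ae_eq_iff_eq μ continuous_const).1 hconst]

end IntegralEstimates

section QuadraticGrowth

variable {E : Type*} [NormedAddCommGroup E] [MeasurableSpace E] {μ : Measure E}
  [IsProbabilityMeasure μ] {φ : E → ℝ} {a b : ℝ}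

lemma integrable_of_abs_sub_zero_le (hμ : MemLp id 2 μ) (hφ : AEStronglyMeasurable φ μ)
    (hbound : ∀ x, |φ x - φ 0| ≤ a * ‖x‖ ^ 2 + b * ‖x‖) : Integrable φ μ := by
  have hdiff : Integrable (fun x => φ x - φ 0) μ :=
    ((hμ.integrable_norm_pow two_ne_zero |>.const_mul a).add
      ((hμ.integrable one_le_two).norm.const_mul b)).mono'
      (hφ.sub aestronglyMeasurable_const) (.of_forall hbound)
  exact (hdiff.add (integrable_const (φ 0))).congr (.of_forall fun x => sub_add_cancel (φ x) (φ 0))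

lemma abs_integral_sub_zero_le (hμ : MemLp id 2 μ) (hφ : AEStronglyMeasurable φ μ) (hb : 0 ≤ b)
    (hbound : ∀ x, |φ x - φ 0| ≤ a * ‖x‖ ^ 2 + b * ‖x‖) :
    |∫ x, φ x ∂μ - φ 0| ≤ a * ∫ x, ‖x‖ ^ 2 ∂μ + b * √(∫ x, ‖x‖ ^ 2 ∂μ) := by
  have hsq : Integrable (fun x : E => a * ‖x‖ ^ 2) μ :=
    (hμ.integrable_norm_pow two_ne_zero).const_mul a
  have hnorm : Integrable (fun x : E => b * ‖x‖) μ :=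
    (hμ.integrable one_le_two).norm.const_mul b
  calc |∫ x, φ x ∂μ - φ 0|
      = |∫ x, (φ x - φ 0) ∂μ| := by
        rw [integral_sub (integrable_of_abs_sub_zero_le hμ hφ hbound) (integrable_const _)]
        simp
    _ ≤ ∫ x, (a * ‖x‖ ^ 2 + b * ‖x‖) ∂μ :=
        norm_integral_le_of_norm_le (f := fun x => φ x - φ 0) (hsq.add hnorm)
          (.of_forall hbound)
    _ = a * ∫ x, ‖x‖ ^ 2 ∂μ + b * ∫ x, ‖x‖ ∂μ := by
        rw [integral_add hsq hnorm, integral_const_mul, integral_const_mul]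
    _ ≤ a * ∫ x, ‖x‖ ^ 2 ∂μ + b * √(∫ x, ‖x‖ ^ 2 ∂μ) := by
        gcongr
        exact integral_norm_le_sqrt_integral_norm_sq hμ

end QuadraticGrowth

section DensityMeasure

variable {α : Type*} [MeasureSpace α] {f g : α → ℝ}

/-- The measure with density `f` with respect to the reference measure `volume`; it turns integrals
against a density, as in `klDiv'`, `meanVec` and `covMat`, into expectations. -/
def densityMeasure (f : α → ℝ) : Measure α :=
  volume.withDensity fun x => ENNReal.ofReal (f x)

lemma integral_densityMeasure (hf : AEMeasurable f) (hf0 : ∀ x, 0 ≤ f x) (φ : α → ℝ) :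
    ∫ x, φ x ∂densityMeasure f = ∫ x, f x * φ x := by
  rw [densityMeasure, integral_withDensity_eq_integral_toReal_smul₀ hf.ennreal_ofReal (by simp)]
  simp [ENNReal.toReal_ofReal, hf0]

lemma integrable_densityMeasure_iff (hf : AEMeasurable f) (hf0 : ∀ x, 0 ≤ f x) {φ : α → ℝ} :
    Integrable φ (densityMeasure f) ↔ Integrable fun x => f x * φ x := by
  rw [densityMeasure, integrable_withDensity_iff_integrable_smul₀' hf.ennreal_ofReal (by simp)]
  simp [ENNReal.toReal_ofReal, hf0]

lemma isProbabilityMeasure_densityMeasure (hf : Integrable f) (hf0 : ∀ x, 0 ≤ f x)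
    (hf1 : ∫ x, f x = 1) : IsProbabilityMeasure (densityMeasure f) := by
  refine ⟨?_⟩
  rw [densityMeasure, withDensity_apply _ .univ, Measure.restrict_univ,
    ← ofReal_integral_eq_lintegral_ofReal hf (.of_forall hf0), hf1, ENNReal.ofReal_one]

lemma isOpenPosMeasure_densityMeasure [TopologicalSpace α]
    [(volume : Measure α).IsOpenPosMeasure] (hf : AEMeasurable f) (hf0 : ∀ x, 0 < f x) :
    (densityMeasure f).IsOpenPosMeasure :=
  (withDensity_absolutelyContinuous' hf.ennreal_ofReal
    (.of_forall fun x => (ENNReal.ofReal_pos.2 (hf0 x)).ne')).isOpenPosMeasure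

lemma integral_log_le_integral_log_densityMeasure (hf : Integrable f) (hg : Integrable g)
    (hf0 : ∀ x, 0 < f x) (hg0 : ∀ x, 0 < g x) (hfg : ∫ x, f x ≤ ∫ x, g x)
    (hlogf : Integrable (fun x => log (f x)) (densityMeasure g))
    (hlogg : Integrable (fun x => log (g x)) (densityMeasure g)) :
    ∫ x, log (f x) ∂densityMeasure g ≤ ∫ x, log (g x) ∂densityMeasure g := by
  have hg0' (x : α) : 0 ≤ g x := (hg0 x).le
  have hpointwise (x : α) : g x * (log (f x) - log (g x)) ≤ f x - g x := by
    rw [← log_div (hf0 x).ne' (hg0 x).ne']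
    calc g x * log (f x / g x) ≤ g x * (f x / g x - 1) :=
          mul_le_mul_of_nonneg_left (log_le_sub_one_of_pos (div_pos (hf0 x) (hg0 x))) (hg0' x)
      _ = f x - g x := by rw [mul_sub, mul_div_cancel₀ _ (hg0 x).ne', mul_one]
  have hint := (integrable_densityMeasure_iff hg.aemeasurable hg0').1 (hlogf.sub hlogg)
  rw [← sub_nonpos, ← integral_sub hlogf hlogg, integral_densityMeasure hg.aemeasurable hg0']
  calc ∫ x, g x * (log (f x) - log (g x)) ≤ ∫ x, (f x - g x) :=
        integral_mono hint (hf.sub hg) hpointwise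
    _ = (∫ x, f x) - ∫ x, g x := integral_sub hf hg
    _ ≤ 0 := sub_nonpos.2 hfg

end DensityMeasure

section CoordinateMoments

open Matrix

variable {ι : Type*} [Fintype ι] {μ : Measure (EuclideanSpace ℝ ι)}

lemma memLp_coord {p : ENNReal} (hμ : MemLp id p μ) (i : ι) :
    MemLp (fun x : EuclideanSpace ℝ ι => x i) p μ :=
  hμ.eval_piLp i

/-- The covariance matrix of the coordinates of a random vector with law `μ`. -/
def coordCovariance (μ : Measure (EuclideanSpace ℝ ι)) : Matrix ι ι ℝ :=
  Matrix.of fun i j => cov[fun x => x i, fun x => x j; μ]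

lemma integral_norm_sq_eq_sum_coordCovariance [IsProbabilityMeasure μ] (hμ : MemLp id 2 μ) :
    ∫ x, ‖x‖ ^ 2 ∂μ = ∑ i, (coordCovariance μ i i + (∫ x, x i ∂μ) ^ 2) := by
  simp_rw [EuclideanSpace.real_norm_sq_eq]
  rw [integral_finsetSum _ fun i _ => (memLp_coord hμ i).integrable_sq]
  refine Finset.sum_congr rfl fun i _ => ?_
  rw [coordCovariance, of_apply, covariance_self (memLp_coord hμ i).aemeasurable,
    variance_eq_sub (memLp_coord hμ i)]
  simp

lemma dotProduct_coordCovariance_mulVec [IsFiniteMeasure μ] (hμ : MemLp id 2 μ) (a : ι → ℝ) :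
    a ⬝ᵥ coordCovariance μ *ᵥ a = Var[fun x => ∑ i, a i * x i; μ] := by
  rw [variance_fun_sum fun i => (memLp_coord hμ i).const_mul (a i)]
  simp only [dotProduct, mulVec, Finset.mul_sum, covariance_const_mul_left,
    covariance_const_mul_right, coordCovariance, of_apply]
  exact Finset.sum_congr rfl fun i _ => Finset.sum_congr rfl fun j _ => by ring

lemma posDef_coordCovariance [IsFiniteMeasure μ] [μ.IsOpenPosMeasure] (hμ : MemLp id 2 μ) :
    (coordCovariance μ).PosDef := by
  refine .of_dotProduct_mulVec_pos (Matrix.ext fun i j => ?_) fun a ha => ?_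
  · simp [coordCovariance, covariance_comm]
  rw [star_trivial, dotProduct_coordCovariance_mulVec hμ]
  refine variance_pos_of_continuous (by fun_prop)
    (memLp_finsetSum _ fun i _ => (memLp_coord hμ i).const_mul (a i))
    (u := WithLp.toLp 2 a) (v := 0) ?_
  simpa [dotProduct] using dotProduct_self_eq_zero.not.2 ha

lemma integrable_mul_centered_coord [IsFiniteMeasure μ] (hμ : MemLp id 2 μ) (m : ι → ℝ)
    (i j : ι) : Integrable (fun x => (x i - m i) * (x j - m j)) μ :=
  ((memLp_coord hμ i).sub (memLp_const _)).integrable_mul ((memLp_coord hμ j).sub (memLp_const _))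

lemma integrable_centered_quadratic [IsFiniteMeasure μ] (hμ : MemLp id 2 μ) (m : ι → ℝ)
    (A : Matrix ι ι ℝ) :
    Integrable (fun x => ∑ i, ∑ j, (x i - m i) * A i j * (x j - m j)) μ := by
  simp_rw [mul_right_comm _ (A _ _)]
  exact integrable_finsetSum _ fun i _ => integrable_finsetSum _ fun j _ =>
    (integrable_mul_centered_coord hμ m i j).mul_const _

lemma integral_centered_quadratic [IsFiniteMeasure μ] (hμ : MemLp id 2 μ) (A : Matrix ι ι ℝ) :
    ∫ x, ∑ i, ∑ j, (x i - ∫ y, y i ∂μ) * A i j * (x j - ∫ y, y j ∂μ) ∂μ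
      = (A * coordCovariance μ).trace := by
  have hterm (i j : ι) := (integrable_mul_centered_coord hμ (fun i => ∫ y, y i ∂μ) i j).const_mul
    (A i j)
  simp_rw [mul_comm _ (A _ _), mul_assoc]
  rw [integral_finsetSum _ fun i _ => integrable_finsetSum _ fun j _ => hterm i j]
  simp_rw [integral_finsetSum _ fun j _ => hterm _ j, integral_const_mul, trace, diag_apply,
    mul_apply, coordCovariance, of_apply, covariance_comm, covariance]

end CoordinateMoments

section ChangeOfVariables

variable {E : Type*} [NormedAddCommGroup E] [NormedSpace ℝ E] [FiniteDimensional ℝ E]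
  [MeasurableSpace E] [BorelSpace E]

lemma map_withDensity_abs_det_fderiv_mul (μ : Measure E) [μ.IsAddHaarMeasure] {T : E → E}
    {T' : E → E →L[ℝ] E} (hT : ∀ x, HasFDerivAt T (T' x) x) (hbij : Function.Bijective T)
    (q : E → ENNReal) :
    (μ.withDensity fun x => ENNReal.ofReal |(T' x).det| * q (T x)).map T = μ.withDensity q := by
  have hmeas : Measurable T :=
    (continuous_iff_continuousAt.2 fun x => (hT x).continuousAt).measurable
  ext s hs
  rw [Measure.map_apply hmeas hs, withDensity_apply _ (hmeas hs), withDensity_apply _ hs,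
    ← lintegral_image_eq_lintegral_abs_det_fderiv_mul μ (hmeas hs)
      (fun x _ => (hT x).hasFDerivWithinAt) hbij.injective.injOn q,
    Set.image_preimage_eq s hbij.surjective]

end ChangeOfVariables

section Gaussian

lemma stdGaussian_eq_densityMeasure {E : Type*} [NormedAddCommGroup E] [InnerProductSpace ℝ E]
    [FiniteDimensional ℝ E] [MeasurableSpace E] [BorelSpace E] :
    stdGaussian E = densityMeasure fun x : E =>
      (2 * π) ^ (-(Module.finrank ℝ E : ℝ) / 2) * rexp (-‖x‖ ^ 2 / 2) := by
  have hexp : Integrable fun x : E => rexp (-‖x‖ ^ 2 / 2) := by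
    refine (GaussianFourier.integrable_cexp_neg_mul_sq_norm_add (b := 1 / 2) (by simp) 0
      (0 : E)).norm.congr (.of_forall fun x => ?_)
    simp [Complex.norm_exp, ← Complex.ofReal_pow, div_eq_inv_mul]
  have : IsFiniteMeasure (densityMeasure fun x : E =>
      (2 * π) ^ (-(Module.finrank ℝ E : ℝ) / 2) * rexp (-‖x‖ ^ 2 / 2)) :=
    isFiniteMeasure_withDensity_ofReal (hexp.const_mul _).hasFiniteIntegral
  have hnormalization : (((2 * π) ^ (-(Module.finrank ℝ E : ℝ) / 2) : ℝ) : ℂ)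
      * (π / (1 / 2)) ^ (Module.finrank ℝ E / 2 : ℂ) = 1 := by
    have hbase : (π / (1 / 2) : ℂ) = ((2 * π : ℝ) : ℂ) := by push_cast; ring
    have hexponent : (Module.finrank ℝ E / 2 : ℂ) = ((Module.finrank ℝ E / 2 : ℝ) : ℂ) := by simp
    rw [hbase, hexponent, ← Complex.ofReal_cpow two_pi_pos.le, ← Complex.ofReal_mul,
      ← rpow_add two_pi_pos, neg_div, neg_add_cancel, rpow_zero, Complex.ofReal_one]
  refine Measure.ext_of_charFun (funext fun t => ?_)
  have hintegrand (x : E) :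
      (ENNReal.ofReal ((2 * π) ^ (-(Module.finrank ℝ E : ℝ) / 2) * rexp (-‖x‖ ^ 2 / 2))).toReal
        • Complex.exp (inner ℝ x t * Complex.I)
      = ((2 * π) ^ (-(Module.finrank ℝ E : ℝ) / 2) : ℝ)
        * Complex.exp (-(1 / 2) * ‖x‖ ^ 2 + Complex.I * inner ℝ t x) := by
    rw [ENNReal.toReal_ofReal (by positivity), Complex.real_smul, Complex.ofReal_mul, mul_assoc,
      Complex.ofReal_exp, ← Complex.exp_add, real_inner_comm]
    push_cast
    ring_nf
  rw [charFun_stdGaussian, charFun_apply, densityMeasure,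
    integral_withDensity_eq_integral_toReal_smul (by fun_prop) (by simp)]
  simp_rw [hintegrand]
  rw [integral_const_mul,
    GaussianFourier.integral_cexp_neg_mul_sq_norm_add (b := 1 / 2) (by simp) Complex.I t,
    ← mul_assoc, hnormalization, one_mul, Complex.I_sq]
  ring_nf

end Gaussian

section GaussianDensity

open Matrix

variable {n : ℕ}

lemma dotProduct_inv_mul_transpose_mulVec {ι : Type*} [Fintype ι] [DecidableEq ι]
    {S : Matrix ι ι ℝ} (hS : IsUnit S.det) (v : ι → ℝ) :
    (S *ᵥ v) ⬝ᵥ ((S * Sᵀ)⁻¹ *ᵥ (S *ᵥ v)) = v ⬝ᵥ v := by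
  have hcancel : Sᵀ * ((S * Sᵀ)⁻¹ * S) = 1 := by
    rw [Matrix.mul_inv_rev, Matrix.mul_assoc, Matrix.nonsing_inv_mul _ hS, Matrix.mul_one,
      Matrix.mul_nonsing_inv _ (by rwa [det_transpose])]
  rw [mulVec_mulVec, ← vecMul_transpose, ← dotProduct_mulVec, mulVec_mulVec, hcancel, one_mulVec]

lemma gaussDensity_eq_exp_dotProduct (m : Fin n → ℝ) (R : Matrix (Fin n) (Fin n) ℝ)
    (x : EuclideanSpace ℝ (Fin n)) :
    gaussDensity m R x = (2 * π) ^ (-(n : ℝ) / 2) * R.det ^ (-(1 : ℝ) / 2) *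
      rexp (-(1 / 2) * ((x.ofLp - m) ⬝ᵥ (R⁻¹ *ᵥ (x.ofLp - m)))) := by
  simp only [gaussDensity, dotProduct, mulVec, Finset.mul_sum, Pi.sub_apply, mul_assoc]

lemma abs_det_mul_gaussDensity_affine {S : Matrix (Fin n) (Fin n) ℝ} (hS : IsUnit S.det)
    (m : Fin n → ℝ) (z : EuclideanSpace ℝ (Fin n)) :
    |S.det| * gaussDensity m (S * Sᵀ) (WithLp.toLp 2 m + toEuclideanCLM (𝕜 := ℝ) S z)
      = (2 * π) ^ (-(n : ℝ) / 2) * rexp (-‖z‖ ^ 2 / 2) := by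
  have hdet : |S.det| * (S * Sᵀ).det ^ (-(1 : ℝ) / 2) = 1 := by
    have hpos : 0 < |S.det| := abs_pos.2 hS.ne_zero
    rw [det_mul, det_transpose, ← abs_mul_abs_self, ← pow_two, ← rpow_natCast, ← rpow_mul hpos.le]
    norm_num [rpow_neg_one, hpos.ne']
  have hquad : ((WithLp.toLp 2 m + toEuclideanCLM (𝕜 := ℝ) S z).ofLp - m) = S *ᵥ z.ofLp := by
    simp
  rw [gaussDensity_eq_exp_dotProduct, hquad, dotProduct_inv_mul_transpose_mulVec hS,
    EuclideanSpace.real_norm_sq_eq, mul_comm ((2 * π) ^ _) (det _ ^ _), mul_assoc, ← mul_assoc,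
    hdet, one_mul]
  simp only [dotProduct, pow_two]
  ring_nf

lemma map_stdGaussian_affine {S : Matrix (Fin n) (Fin n) ℝ} (hS : IsUnit S.det) (m : Fin n → ℝ) :
    (stdGaussian (EuclideanSpace ℝ (Fin n))).map
        (fun z => WithLp.toLp 2 m + toEuclideanCLM (𝕜 := ℝ) S z)
      = densityMeasure (gaussDensity m (S * Sᵀ)) := by
  have hderiv (z) : HasFDerivAt (fun z => WithLp.toLp 2 m + toEuclideanCLM (𝕜 := ℝ) S z)
      (toEuclideanCLM (𝕜 := ℝ) S) z :=
    ((toEuclideanCLM (𝕜 := ℝ) S).hasFDerivAt).const_add _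
  have hdet : (toEuclideanCLM (𝕜 := ℝ) S).det = S.det := LinearMap.det_toLpLin 2 S
  have hbij : Function.Bijective fun z => WithLp.toLp 2 m + toEuclideanCLM (𝕜 := ℝ) S z :=
    (Equiv.addLeft (WithLp.toLp 2 m)).bijective.comp
      (LinearMap.equivOfDetNeZero _ (hdet.trans_ne hS.ne_zero)).bijective
  rw [densityMeasure, ← map_withDensity_abs_det_fderiv_mul volume hderiv hbij,
    stdGaussian_eq_densityMeasure, densityMeasure]
  simp_rw [hdet, ← ENNReal.ofReal_mul (abs_nonneg _), abs_det_mul_gaussDensity_affine hS,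
    finrank_euclideanSpace_fin]

open scoped MatrixOrder Matrix.Norms.L2Operator in
lemma densityMeasure_gaussDensity (m : Fin n → ℝ) {R : Matrix (Fin n) (Fin n) ℝ} (hR : R.PosDef) :
    densityMeasure (gaussDensity m R) = multivariateGaussian (WithLp.toLp 2 m) R := by
  set S := CFC.sqrt R
  have hSymm : Sᵀ = S := by
    have := (CFC.sqrt_nonneg R).isSelfAdjoint
    simpa [IsSelfAdjoint, star_eq_conjTranspose] using this
  have hsq : S * Sᵀ = R := by
    rw [hSymm]; exact CFC.sqrt_mul_sqrt_self R hR.posSemidef.nonneg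
  have hS : IsUnit S.det := by
    have : S.det * S.det = R.det := by rw [← hsq, det_mul, det_transpose]
    exact isUnit_of_mul_isUnit_left (this ▸ hR.det_pos.ne'.isUnit)
  rw [← hsq, ← map_stdGaussian_affine hS, hsq, multivariateGaussian]

end GaussianDensity

section GaussianMoments

variable {n : ℕ} {m : Fin n → ℝ} {R : Matrix (Fin n) (Fin n) ℝ}

lemma gaussDensity_pos (hR : R.PosDef) (m : Fin n → ℝ) (x : EuclideanSpace ℝ (Fin n)) :
    0 < gaussDensity m R x := by
  have := hR.det_pos
  unfold gaussDensity
  positivity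

lemma measurable_gaussDensity (m : Fin n → ℝ) (R : Matrix (Fin n) (Fin n) ℝ) :
    Measurable (gaussDensity m R) := by
  unfold gaussDensity
  fun_prop

lemma isDensity_gaussDensity (hR : R.PosDef) (m : Fin n → ℝ) : IsDensity (gaussDensity m R) := by
  have hpos (x : EuclideanSpace ℝ (Fin n)) := (gaussDensity_pos hR m x).le
  have hmeas := (measurable_gaussDensity m R).aemeasurable (μ := volume)
  have : IsProbabilityMeasure (densityMeasure (gaussDensity m R)) := by
    rw [densityMeasure_gaussDensity m hR]; infer_instance
  refine ⟨hpos, ?_, ?_⟩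
  · simpa using (integrable_densityMeasure_iff hmeas hpos).1 (integrable_const (1 : ℝ))
  · simpa using (integral_densityMeasure hmeas hpos fun _ => 1).symm

lemma log_gaussDensity (hR : R.PosDef) (m : Fin n → ℝ) (x : EuclideanSpace ℝ (Fin n)) :
    log (gaussDensity m R x) = -(n / 2 * log (2 * π) + log R.det / 2)
      - (∑ i, ∑ j, (x i - m i) * R⁻¹ i j * (x j - m j)) / 2 := by
  have hdet := hR.det_pos
  rw [gaussDensity, log_mul (by positivity) (exp_pos _).ne',
    log_mul (by positivity) (by positivity), log_rpow two_pi_pos, log_rpow hdet, log_exp]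
  ring

variable {μ : Measure (EuclideanSpace ℝ (Fin n))}

lemma integrable_log_gaussDensity [IsFiniteMeasure μ] (hμ : MemLp id 2 μ) (hR : R.PosDef)
    (m : Fin n → ℝ) : Integrable (fun x => log (gaussDensity m R x)) μ := by
  simp_rw [log_gaussDensity hR]
  exact (integrable_const _).sub ((integrable_centered_quadratic hμ m R⁻¹).div_const 2)

lemma integral_log_gaussDensity [IsProbabilityMeasure μ] (hμ : MemLp id 2 μ) (hR : R.PosDef)
    (hmean : ∀ i, ∫ x, x i ∂μ = m i) (hcov : coordCovariance μ = R) :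
    ∫ x, log (gaussDensity m R x) ∂μ = -(n / 2 * log (2 * π) + log R.det / 2) - n / 2 := by
  have hquad := integral_centered_quadratic hμ R⁻¹
  rw [hcov, Matrix.nonsing_inv_mul _ hR.det_pos.ne'.isUnit, Matrix.trace_one,
    Fintype.card_fin] at hquad
  simp_rw [hmean] at hquad
  simp_rw [log_gaussDensity hR]
  rw [integral_sub (integrable_const _)
    ((integrable_centered_quadratic hμ m R⁻¹).div_const 2), integral_div, hquad]
  simp

lemma integral_coord_multivariateGaussian (m : EuclideanSpace ℝ (Fin n))
    (R : Matrix (Fin n) (Fin n) ℝ) (i : Fin n) : ∫ x, x i ∂multivariateGaussian m R = m i := by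
  have h := (EuclideanSpace.proj (𝕜 := ℝ) i).integral_comp_comm
    (IsGaussian.integrable_id (μ := multivariateGaussian m R))
  simpa using h

lemma coordCovariance_multivariateGaussian (m : EuclideanSpace ℝ (Fin n)) (hR : R.PosSemidef) :
    coordCovariance (multivariateGaussian m R) = R :=
  Matrix.ext fun i j => covariance_eval_multivariateGaussian hR i j

end GaussianMoments

section DivergenceFromGaussian

variable {n : ℕ} {f g : EuclideanSpace ℝ (Fin n) → ℝ}

lemma klDiv'_eq_integral_log_sub (hf : AEMeasurable f) (hf0 : ∀ x, 0 < f x) (hg0 : ∀ x, 0 < g x)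
    (hlogf : Integrable (fun x => log (f x)) (densityMeasure f))
    (hlogg : Integrable (fun x => log (g x)) (densityMeasure f)) :
    klDiv' f g = ∫ x, log (f x) ∂densityMeasure f - ∫ x, log (g x) ∂densityMeasure f := by
  rw [← integral_sub hlogf hlogg, integral_densityMeasure hf fun x => (hf0 x).le]
  simp_rw [klDiv', fun x => log_div (hf0 x).ne' (hg0 x).ne']

namespace IsDensity

lemma meanVec_eq (hf : IsDensity f) (i : Fin n) : meanVec f i = ∫ x, x i ∂densityMeasure f :=
  (integral_densityMeasure hf.2.1.aemeasurable hf.1 _).symm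

lemma covMat_eq_coordCovariance (hf : IsDensity f) :
    covMat f = coordCovariance (densityMeasure f) := by
  ext i j
  simp_rw [covMat, coordCovariance, Matrix.of_apply, covariance, hf.meanVec_eq,
    integral_densityMeasure hf.2.1.aemeasurable hf.1, mul_assoc]

lemma isProbabilityMeasure (hf : IsDensity f) : IsProbabilityMeasure (densityMeasure f) :=
  isProbabilityMeasure_densityMeasure hf.2.1 hf.1 hf.2.2

lemma memLp_id (hf : IsDensity f) (hmom : Integrable fun x => f x * ‖x‖ ^ 2) :
    MemLp id 2 (densityMeasure f) :=
  (memLp_two_iff_integrable_sq_norm aestronglyMeasurable_id).2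
    ((integrable_densityMeasure_iff hf.2.1.aemeasurable hf.1).2 hmom)

lemma posDef_covMat (hf : IsDensity f) (hf0 : ∀ x, 0 < f x)
    (hmom : Integrable fun x => f x * ‖x‖ ^ 2) : (covMat f).PosDef := by
  have := hf.isProbabilityMeasure
  have := isOpenPosMeasure_densityMeasure hf.2.1.aemeasurable hf0
  exact hf.covMat_eq_coordCovariance ▸ posDef_coordCovariance (hf.memLp_id hmom)

lemma integral_norm_sq_le {M : ℝ} (hf : IsDensity f) (hmom : Integrable fun x => f x * ‖x‖ ^ 2)
    (hM : ∀ k, ∫ x, f x * x k ^ 2 ≤ M) : ∫ x, f x * ‖x‖ ^ 2 ≤ n * M := by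
  have hcoord (k : Fin n) : Integrable (fun x => f x * x k ^ 2) :=
    (integrable_densityMeasure_iff hf.2.1.aemeasurable hf.1).1
      (memLp_coord (hf.memLp_id hmom) k).integrable_sq
  simp_rw [EuclideanSpace.real_norm_sq_eq, Finset.mul_sum]
  rw [integral_finsetSum _ fun k _ => hcoord k]
  simpa using Finset.sum_le_sum fun k (_ : k ∈ Finset.univ) => hM k

lemma klToGauss_le_integral_log_sub (hf : IsDensity f) (hf0 : ∀ x, 0 < f x)
    (hmom : Integrable fun x => f x * ‖x‖ ^ 2)
    (hlogP : Integrable (fun x => log (f x)) (densityMeasure f))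
    (hlogQ : Integrable (fun x => log (f x))
      (multivariateGaussian (WithLp.toLp 2 (meanVec f)) (covMat f))) :
    KLtoGauss f ≤ ∫ x, log (f x) ∂densityMeasure f
      - ∫ x, log (f x) ∂multivariateGaussian (WithLp.toLp 2 (meanVec f)) (covMat f) := by
  have := hf.isProbabilityMeasure
  have hcov := hf.posDef_covMat hf0 hmom
  have hg := isDensity_gaussDensity hcov (meanVec f)
  have hg0 := gaussDensity_pos hcov (meanVec f)
  have hP := hf.memLp_id hmom
  set Q := multivariateGaussian (WithLp.toLp 2 (meanVec f)) (covMat f)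
  have hQ : MemLp id 2 Q := IsGaussian.memLp_id Q 2 (by simp)
  have hcross : ∫ x, log (gaussDensity (meanVec f) (covMat f) x) ∂densityMeasure f
      = ∫ x, log (gaussDensity (meanVec f) (covMat f) x) ∂Q := by
    rw [integral_log_gaussDensity hP hcov (fun i => (hf.meanVec_eq i).symm)
      hf.covMat_eq_coordCovariance.symm, integral_log_gaussDensity hQ hcov
      (integral_coord_multivariateGaussian _ _)
      (coordCovariance_multivariateGaussian _ hcov.posSemidef)]
  have hgibbs : ∫ x, log (f x) ∂Q ≤ ∫ x, log (gaussDensity (meanVec f) (covMat f) x) ∂Q := by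
    have hlogg := integrable_log_gaussDensity hQ hcov (meanVec f)
    simp only [Q, ← densityMeasure_gaussDensity (meanVec f) hcov] at hlogQ hlogg ⊢
    exact integral_log_le_integral_log_densityMeasure hf.2.1 hg.2.1 hf0 hg0
      (hf.2.2.trans hg.2.2.symm).le hlogQ hlogg
  rw [KLtoGauss, klDiv'_eq_integral_log_sub hf.2.1.aemeasurable hf0 hg0 hlogP
    (integrable_log_gaussDensity hP hcov _), hcross]
  exact sub_le_sub_left hgibbs _

lemma integral_norm_sq_multivariateGaussian (hf : IsDensity f) (hf0 : ∀ x, 0 < f x)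
    (hmom : Integrable fun x => f x * ‖x‖ ^ 2) :
    ∫ x, ‖x‖ ^ 2 ∂multivariateGaussian (WithLp.toLp 2 (meanVec f)) (covMat f)
      = ∫ x, f x * ‖x‖ ^ 2 := by
  have := hf.isProbabilityMeasure
  rw [← integral_densityMeasure hf.2.1.aemeasurable hf.1,
    integral_norm_sq_eq_sum_coordCovariance (hf.memLp_id hmom),
    integral_norm_sq_eq_sum_coordCovariance (IsGaussian.memLp_id _ 2 (by simp)),
    coordCovariance_multivariateGaussian _ (hf.posDef_covMat hf0 hmom).posSemidef,
    ← hf.covMat_eq_coordCovariance]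
  simp_rw [integral_coord_multivariateGaussian, hf.meanVec_eq]

end IsDensity

namespace IsRegularDensity

variable {c₁ c₂ : ℝ}

lemma abs_log_sub_log_zero_le (hreg : IsRegularDensity c₁ c₂ f) (x : EuclideanSpace ℝ (Fin n)) :
    |log (f x) - log (f 0)| ≤ c₁ / 2 * ‖x‖ ^ 2 + c₂ * ‖x‖ :=
  norm_sub_zero_le_of_norm_fderiv_le (fun x => (hreg.2.1 x).log (hreg.1 x).ne')
    (fun x => by simpa only [gradient, LinearIsometryEquiv.norm_map] using hreg.2.2 x) x

lemma const_nonneg (hreg : IsRegularDensity c₁ c₂ f) : 0 ≤ c₂ :=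
  (norm_nonneg _).trans (by simpa only [norm_zero, mul_zero, zero_add] using hreg.2.2 0)

lemma slope_nonneg (hreg : IsRegularDensity c₁ c₂ f) (hn : 1 ≤ n) : 0 ≤ c₁ := by
  have : NeZero n := ⟨by lia⟩
  by_contra! hc₁
  obtain ⟨x, hx⟩ := exists_norm_eq (EuclideanSpace ℝ (Fin n))
    (div_nonneg (add_nonneg hreg.const_nonneg zero_le_one) (neg_nonneg.2 hc₁.le))
  have hgradient := (norm_nonneg _).trans (hreg.2.2 x)
  rw [hx, div_neg, mul_neg, mul_div_cancel₀ _ hc₁.ne] at hgradient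
  linarith

lemma klToGauss_le (hreg : IsRegularDensity c₁ c₂ f) (hf : IsDensity f)
    (hmom : Integrable fun x => f x * ‖x‖ ^ 2) :
    KLtoGauss f ≤ c₁ * (∫ x, f x * ‖x‖ ^ 2) + 2 * c₂ * √(∫ x, f x * ‖x‖ ^ 2) := by
  have := hf.isProbabilityMeasure
  have hP := hf.memLp_id hmom
  set Q := multivariateGaussian (WithLp.toLp 2 (meanVec f)) (covMat f)
  have hQ : MemLp id 2 Q := IsGaussian.memLp_id Q 2 (by simp)
  have hmeas {μ : Measure (EuclideanSpace ℝ (Fin n))} :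
      AEStronglyMeasurable (fun x => log (f x)) μ :=
    (hreg.2.1.continuous.log fun x => (hreg.1 x).ne').aestronglyMeasurable
  have hgrowth := hreg.abs_log_sub_log_zero_le
  have hdevP := abs_integral_sub_zero_le hP hmeas hreg.const_nonneg hgrowth
  have hdevQ := abs_integral_sub_zero_le hQ hmeas hreg.const_nonneg hgrowth
  rw [integral_densityMeasure hf.2.1.aemeasurable hf.1 (fun x => ‖x‖ ^ 2)] at hdevP
  rw [hf.integral_norm_sq_multivariateGaussian hreg.1 hmom] at hdevQ
  have hkl := hf.klToGauss_le_integral_log_sub hreg.1 hmom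
    (integrable_of_abs_sub_zero_le hP hmeas hgrowth)
    (integrable_of_abs_sub_zero_le hQ hmeas hgrowth)
  linarith [(abs_le.1 hdevP).2, (abs_le.1 hdevQ).1]

lemma klToGauss_div_le {M : ℝ} (hreg : IsRegularDensity c₁ c₂ f) (hn : 1 ≤ n) (hf : IsDensity f)
    (hmom : Integrable fun x => f x * ‖x‖ ^ 2) (hM : ∀ k, ∫ x, f x * x k ^ 2 ≤ M) :
    (1 / n : ℝ) * KLtoGauss f ≤ c₁ * M + 2 * c₂ * √M / √n := by
  have hn0 : (0 : ℝ) < n := by exact_mod_cast hn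
  have hc₁ := hreg.slope_nonneg hn
  have hc₂ := hreg.const_nonneg
  have hV := hf.integral_norm_sq_le hmom hM
  calc (1 / n : ℝ) * KLtoGauss f
      ≤ 1 / n * (c₁ * (∫ x, f x * ‖x‖ ^ 2) + 2 * c₂ * √(∫ x, f x * ‖x‖ ^ 2)) := by
        gcongr
        exact hreg.klToGauss_le hf hmom
    _ ≤ 1 / n * (c₁ * (n * M) + 2 * c₂ * √(n * M)) := by gcongr
    _ = c₁ * M + 2 * c₂ * √M / √n := by
        rw [sqrt_mul hn0.le]
        field_simp
        linear_combination 2 * c₂ * √M * sq_sqrt hn0.le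

end IsRegularDensity

end DivergenceFromGaussian

theorem stmt4_general (f : (n : ℕ) → EuclideanSpace ℝ (Fin n) → ℝ)
    (hdens : ∀ n, IsDensity (f n))
    (hmom : ∀ n, Integrable fun x : EuclideanSpace ℝ (Fin n) => f n x * ‖x‖ ^ 2)
    (M : ℝ)
    (hM : ∀ n, ∀ k : Fin n, (∫ x : EuclideanSpace ℝ (Fin n), f n x * (x k) ^ 2) ≤ M)
    (c₁ c₂ : ℝ) (hreg : ∀ n, IsRegularDensity c₁ c₂ (f n)) :
    (∃ c : ℝ, ∀ n : ℕ, 1 ≤ n → (1 / n : ℝ) * KLtoGauss (f n) ≤ c) ∧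
      ∀ n : ℕ, 1 ≤ n → (1 / n : ℝ) * KLtoGauss (f n)
        ≤ 2 * c₁ * M + 2 * c₂ * √M / √n := by
  have hM0 : 0 ≤ M :=
    (integral_nonneg fun x => mul_nonneg ((hdens 1).1 x) (sq_nonneg _)).trans (hM 1 0)
  have hc₁M : 0 ≤ c₁ * M := mul_nonneg ((hreg 1).slope_nonneg le_rfl) hM0
  have hc₂ := (hreg 1).const_nonneg
  have hrate (n : ℕ) (hn : 1 ≤ n) :=
    (hreg n).klToGauss_div_le hn (hdens n) (hmom n) (hM n)
  refine ⟨⟨c₁ * M + 2 * c₂ * √M, fun n hn => (hrate n hn).trans ?_⟩, fun n hn => ?_⟩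
  · gcongr
    exact div_le_self (by positivity) (one_le_sqrt.2 (by exact_mod_cast hn))
  · linarith [hrate n hn]

theorem stmt4 (f : (n : ℕ) → EuclideanSpace ℝ (Fin n) → ℝ)
    (hdens : ∀ n, IsDensity (f n)) (hlc : ∀ n, LogConcaveFn (f n))
    (hmom : ∀ n, Integrable fun x : EuclideanSpace ℝ (Fin n) => f n x * ‖x‖ ^ 2)
    (M : ℝ)
    (hM : ∀ n, ∀ k : Fin n, (∫ x : EuclideanSpace ℝ (Fin n), f n x * (x k) ^ 2) ≤ M)
    (c₁ c₂ : ℝ) (hc₁ : 0 < c₁) (hc₂ : 0 ≤ c₂)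
    (hreg : ∀ n, IsRegularDensity c₁ c₂ (f n)) :
    (∃ c : ℝ, ∀ n : ℕ, 1 ≤ n → (1 / n : ℝ) * KLtoGauss (f n) ≤ c) ∧
      ∀ n : ℕ, 1 ≤ n → (1 / n : ℝ) * KLtoGauss (f n)
        ≤ 2 * c₁ * M + 2 * c₂ * Real.sqrt M / Real.sqrt n := by
  exact stmt4_general f hdens hmom M hM c₁ c₂ hreg

end
end

section
/- Let (U, V) be jointly distributed random vectors in ℝ^n with finite second moments, suppose U has a probability density p_U and V has a (c1,c2)-regular probability density p_V, and suppose the differential entropies h(U) = −∫ p_U log p_U and h(V) = −∫ p_V log p_V are finite. Then h(U) − h(V) ≤ ((c1/2)·√(E[‖U‖²]) + (c1/2)·√(E[‖V‖²]) + c2) · √(E[‖U − V‖²]). -/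
open MeasureTheory Real ProbabilityTheory
open scoped BigOperators ENNReal

noncomputable section
open MeasureTheory Real ProbabilityTheory

/-!
The log-density `log p_V` has gradient of affine growth, so integrating along a segment gives
`|log p_V(u) - log p_V(v)| ≤ (c₁/2 ‖u‖ + c₁/2 ‖v‖ + c₂) ‖u - v‖`. Taking expectations and using
Cauchy–Schwarz bounds `E[log p_V(V)] - E[log p_V(U)]` by the right-hand side of the theorem.
By Gibbs' inequality `-E[log p_V(U)]` is at least `h(U)`, while `-E[log p_V(V)] = h(V)`.
-/

section MeanValue

variable {E F : Type*} [NormedAddCommGroup E] [NormedSpace ℝ E] [NormedAddCommGroup F]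
  [NormedSpace ℝ F]

lemma norm_image_one_sub_image_zero_le_of_norm_deriv_le_affine {f f' : ℝ → F} {a b : ℝ}
    (hf : ∀ t ∈ Set.Icc (0 : ℝ) 1, HasDerivWithinAt f (f' t) (Set.Icc 0 1) t)
    (bound : ∀ t ∈ Set.Ico (0 : ℝ) 1, ‖f' t‖ ≤ (1 - t) * a + t * b) :
    ‖f 1 - f 0‖ ≤ (a + b) / 2 := by
  have hB (t : ℝ) :
      HasDerivAt (fun t ↦ (t - t ^ 2 / 2) * a + t ^ 2 / 2 * b) ((1 - t) * a + t * b) t := by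
    have hsq : HasDerivAt (fun t : ℝ ↦ t ^ 2 / 2) t t := by
      simpa using (hasDerivAt_pow 2 t).div_const 2
    exact (((hasDerivAt_id' t).sub hsq).mul_const a).add (hsq.mul_const b)
  have hright : ∀ t ∈ Set.Ico (0 : ℝ) 1,
      HasDerivWithinAt (fun t ↦ f t - f 0) (f' t) (Set.Ici t) t := fun t ht ↦
    ((hf t (Set.Ico_subset_Icc_self ht)).mono_of_mem_nhdsWithin
      (Icc_mem_nhdsGE_of_mem ht)).sub_const _
  have hcont : ContinuousOn (fun t ↦ f t - f 0) (Set.Icc 0 1) := fun t ht ↦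
    (hf t ht).continuousWithinAt.sub continuousWithinAt_const
  calc ‖f 1 - f 0‖ ≤ (1 - 1 ^ 2 / 2) * a + 1 ^ 2 / 2 * b :=
        image_norm_le_of_norm_deriv_right_le_deriv_boundary hcont hright (by simp) hB bound
          (Set.right_mem_Icc.2 zero_le_one)
    _ = (a + b) / 2 := by ring

lemma norm_image_sub_le_of_norm_hasFDerivWithinAt_le_convexOn {s : Set E} {f : E → F}
    {f' : E → E →L[ℝ] F} {φ : E → ℝ} (hφ : ConvexOn ℝ s φ)
    (hf : ∀ x ∈ s, HasFDerivWithinAt f (f' x) s x) (bound : ∀ x ∈ s, ‖f' x‖ ≤ φ x)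
    {x y : E} (hx : x ∈ s) (hy : y ∈ s) :
    ‖f y - f x‖ ≤ (φ x + φ y) / 2 * ‖y - x‖ := by
  let γ : ℝ → E := AffineMap.lineMap x y
  have hγ : Set.MapsTo γ (Set.Icc 0 1) s := hφ.1.mapsTo_lineMap hx hy
  have hderiv : ∀ t ∈ Set.Icc (0 : ℝ) 1,
      HasDerivWithinAt (f ∘ γ) (f' (γ t) (y - x)) (Set.Icc 0 1) t := fun t ht ↦
    (hf (γ t) (hγ ht)).comp_hasDerivWithinAt t AffineMap.hasDerivWithinAt_lineMap hγ
  have hφγ : ∀ t ∈ Set.Ico (0 : ℝ) 1, φ (γ t) ≤ (1 - t) * φ x + t * φ y := fun t ht ↦ by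
    simpa [γ, AffineMap.lineMap_apply_module] using
      hφ.2 hx hy (sub_nonneg.2 ht.2.le) ht.1 (sub_add_cancel 1 t)
  have hbound : ∀ t ∈ Set.Ico (0 : ℝ) 1,
      ‖f' (γ t) (y - x)‖ ≤ (1 - t) * (φ x * ‖y - x‖) + t * (φ y * ‖y - x‖) := fun t ht ↦
    calc ‖f' (γ t) (y - x)‖ ≤ ((1 - t) * φ x + t * φ y) * ‖y - x‖ :=
          (f' (γ t)).le_of_opNorm_le
            ((bound _ (hγ (Set.Ico_subset_Icc_self ht))).trans (hφγ t ht)) _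
      _ = (1 - t) * (φ x * ‖y - x‖) + t * (φ y * ‖y - x‖) := by ring
  calc ‖f y - f x‖ ≤ (φ x * ‖y - x‖ + φ y * ‖y - x‖) / 2 := by
        simpa [γ] using norm_image_one_sub_image_zero_le_of_norm_deriv_le_affine hderiv hbound
    _ = (φ x + φ y) / 2 * ‖y - x‖ := by ring

lemma norm_image_sub_le_of_norm_fderiv_le_affine {f : E → F} {c₁ c₂ : ℝ} (hc₁ : 0 ≤ c₁)
    (hf : Differentiable ℝ f) (bound : ∀ x, ‖fderiv ℝ f x‖ ≤ c₁ * ‖x‖ + c₂) (x y : E) :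
    ‖f x - f y‖ ≤ (c₁ / 2 * ‖x‖ + c₁ / 2 * ‖y‖ + c₂) * ‖x - y‖ := by
  have hconvex : ConvexOn ℝ Set.univ fun x : E ↦ c₁ * ‖x‖ + c₂ :=
    (convexOn_univ_norm.smul hc₁).add_const c₂
  calc ‖f x - f y‖ ≤ ((c₁ * ‖y‖ + c₂) + (c₁ * ‖x‖ + c₂)) / 2 * ‖x - y‖ :=
        norm_image_sub_le_of_norm_hasFDerivWithinAt_le_convexOn hconvex
          (fun z _ ↦ (hf z).hasFDerivAt.hasFDerivWithinAt) (fun z _ ↦ bound z)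
          (Set.mem_univ y) (Set.mem_univ x)
    _ = (c₁ / 2 * ‖x‖ + c₁ / 2 * ‖y‖ + c₂) * ‖x - y‖ := by ring

end MeanValue

section SecondMoments

variable {Ω E F G : Type*} [MeasurableSpace Ω] {P : Measure Ω} [NormedAddCommGroup E]
  [NormedAddCommGroup F] [NormedAddCommGroup G]

lemma integral_norm_mul_norm_le_sqrt_mul_sqrt {X : Ω → E} {Y : Ω → F} (hX : MemLp X 2 P)
    (hY : MemLp Y 2 P) :
    ∫ ω, ‖X ω‖ * ‖Y ω‖ ∂P ≤ √(∫ ω, ‖X ω‖ ^ 2 ∂P) * √(∫ ω, ‖Y ω‖ ^ 2 ∂P) := by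
  simpa [Real.sqrt_eq_rpow] using integral_mul_norm_le_Lp_mul_Lq Real.HolderConjugate.two_two
    (f := fun ω ↦ ‖X ω‖) (g := fun ω ↦ ‖Y ω‖) (μ := P) (by simpa using hX.norm)
    (by simpa using hY.norm)

lemma integrable_affine_norm_mul_norm [IsFiniteMeasure P] {X : Ω → E} {Y : Ω → F} {Z : Ω → G}
    (hX : MemLp X 2 P) (hY : MemLp Y 2 P) (hZ : MemLp Z 2 P) (a b c : ℝ) :
    Integrable (fun ω ↦ (a * ‖X ω‖ + b * ‖Y ω‖ + c) * ‖Z ω‖) P :=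
  (((hX.norm.const_mul a).add (hY.norm.const_mul b)).add (memLp_const c)).integrable_mul hZ.norm

lemma integral_affine_norm_mul_norm_le [IsProbabilityMeasure P] {X : Ω → E} {Y : Ω → F}
    {Z : Ω → G} (hX : MemLp X 2 P) (hY : MemLp Y 2 P) (hZ : MemLp Z 2 P) {a b c : ℝ}
    (ha : 0 ≤ a) (hb : 0 ≤ b) (hc : 0 ≤ c) :
    ∫ ω, (a * ‖X ω‖ + b * ‖Y ω‖ + c) * ‖Z ω‖ ∂P ≤
      (a * √(∫ ω, ‖X ω‖ ^ 2 ∂P) + b * √(∫ ω, ‖Y ω‖ ^ 2 ∂P) + c) * √(∫ ω, ‖Z ω‖ ^ 2 ∂P) := by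
  have hXZ : Integrable (fun ω ↦ a * (‖X ω‖ * ‖Z ω‖)) P :=
    (hX.norm.integrable_mul hZ.norm).const_mul a
  have hYZ : Integrable (fun ω ↦ b * (‖Y ω‖ * ‖Z ω‖)) P :=
    (hY.norm.integrable_mul hZ.norm).const_mul b
  have hXYZ : Integrable (fun ω ↦ a * (‖X ω‖ * ‖Z ω‖) + b * (‖Y ω‖ * ‖Z ω‖)) P := hXZ.add hYZ
  have hZ1 : Integrable (fun ω ↦ c * ‖Z ω‖) P := (hZ.norm.integrable one_le_two).const_mul c
  have hZ_le : ∫ ω, ‖Z ω‖ ∂P ≤ √(∫ ω, ‖Z ω‖ ^ 2 ∂P) := by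
    simpa using integral_norm_mul_norm_le_sqrt_mul_sqrt (memLp_const (1 : ℝ)) hZ
  calc ∫ ω, (a * ‖X ω‖ + b * ‖Y ω‖ + c) * ‖Z ω‖ ∂P
      = ∫ ω, a * (‖X ω‖ * ‖Z ω‖) + b * (‖Y ω‖ * ‖Z ω‖) + c * ‖Z ω‖ ∂P := by
        congr with ω
        ring
    _ = a * (∫ ω, ‖X ω‖ * ‖Z ω‖ ∂P) + b * (∫ ω, ‖Y ω‖ * ‖Z ω‖ ∂P) + c * ∫ ω, ‖Z ω‖ ∂P := by
        rw [integral_add hXYZ hZ1, integral_add hXZ hYZ]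
        simp only [integral_const_mul]
    _ ≤ a * (√(∫ ω, ‖X ω‖ ^ 2 ∂P) * √(∫ ω, ‖Z ω‖ ^ 2 ∂P)) +
          b * (√(∫ ω, ‖Y ω‖ ^ 2 ∂P) * √(∫ ω, ‖Z ω‖ ^ 2 ∂P)) + c * √(∫ ω, ‖Z ω‖ ^ 2 ∂P) := by
        gcongr
        · exact integral_norm_mul_norm_le_sqrt_mul_sqrt hX hZ
        · exact integral_norm_mul_norm_le_sqrt_mul_sqrt hY hZ
    _ = _ := by ring

variable [NormedSpace ℝ E] [NormedSpace ℝ F] {f : E → F} {c₁ c₂ : ℝ}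

lemma integrable_comp_of_norm_fderiv_le_affine [IsFiniteMeasure P] (hc₁ : 0 ≤ c₁)
    (hf : Differentiable ℝ f) (bound : ∀ x, ‖fderiv ℝ f x‖ ≤ c₁ * ‖x‖ + c₂) {X : Ω → E}
    (hX : MemLp X 2 P) : Integrable (fun ω ↦ f (X ω)) P := by
  have hmeas : AEStronglyMeasurable (fun ω ↦ f (X ω)) P :=
    hf.continuous.comp_aestronglyMeasurable hX.aestronglyMeasurable
  have hsub : Integrable (fun ω ↦ f (X ω) - f 0) P :=
    (integrable_affine_norm_mul_norm hX (memLp_const (0 : E)) (hX.sub (memLp_const (0 : E)))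
      (c₁ / 2) (c₁ / 2) c₂).mono' (hmeas.sub aestronglyMeasurable_const)
      (.of_forall fun ω ↦ norm_image_sub_le_of_norm_fderiv_le_affine hc₁ hf bound (X ω) 0)
  exact (hsub.add (integrable_const (f 0))).congr (.of_forall fun ω ↦ sub_add_cancel _ _)

lemma norm_integral_comp_sub_integral_comp_le_of_norm_fderiv_le_affine [IsProbabilityMeasure P]
    (hc₁ : 0 ≤ c₁) (hf : Differentiable ℝ f) (bound : ∀ x, ‖fderiv ℝ f x‖ ≤ c₁ * ‖x‖ + c₂)
    {X Y : Ω → E} (hX : MemLp X 2 P) (hY : MemLp Y 2 P) :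
    ‖(∫ ω, f (X ω) ∂P) - ∫ ω, f (Y ω) ∂P‖ ≤
      (c₁ / 2 * √(∫ ω, ‖X ω‖ ^ 2 ∂P) + c₁ / 2 * √(∫ ω, ‖Y ω‖ ^ 2 ∂P) + c₂) *
        √(∫ ω, ‖X ω - Y ω‖ ^ 2 ∂P) := by
  have hc₂ : 0 ≤ c₂ := by simpa using (norm_nonneg _).trans (bound 0)
  calc ‖(∫ ω, f (X ω) ∂P) - ∫ ω, f (Y ω) ∂P‖
      = ‖∫ ω, f (X ω) - f (Y ω) ∂P‖ := by
        rw [integral_sub (integrable_comp_of_norm_fderiv_le_affine hc₁ hf bound hX)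
          (integrable_comp_of_norm_fderiv_le_affine hc₁ hf bound hY)]
    _ ≤ ∫ ω, (c₁ / 2 * ‖X ω‖ + c₁ / 2 * ‖Y ω‖ + c₂) * ‖X ω - Y ω‖ ∂P :=
        norm_integral_le_of_norm_le (integrable_affine_norm_mul_norm hX hY (hX.sub hY) _ _ _)
          (.of_forall fun ω ↦ norm_image_sub_le_of_norm_fderiv_le_affine hc₁ hf bound _ _)
    _ ≤ _ := integral_affine_norm_mul_norm_le hX hY (hX.sub hY) (by positivity) (by positivity) hc₂

end SecondMoments

section Density

variable {Ω α F : Type*} [MeasurableSpace Ω] [MeasurableSpace α] {P : Measure Ω} {μ : Measure α}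
  [NormedAddCommGroup F] [NormedSpace ℝ F] {X : Ω → α} {p : α → ℝ}

lemma integrable_comp_iff_integrable_density_smul (hX : AEMeasurable X P) (hp : AEMeasurable p μ)
    (hp0 : 0 ≤ᵐ[μ] p) (hlaw : P.map X = μ.withDensity fun x ↦ ENNReal.ofReal (p x)) {g : α → F}
    (hg : AEStronglyMeasurable g (P.map X)) :
    Integrable (fun ω ↦ g (X ω)) P ↔ Integrable (fun x ↦ p x • g x) μ := by
  have hsmul : (fun x ↦ (ENNReal.ofReal (p x)).toReal • g x) =ᵐ[μ] fun x ↦ p x • g x :=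
    hp0.mono fun x hx ↦ by simp only [ENNReal.toReal_ofReal hx]
  calc Integrable (fun ω ↦ g (X ω)) P
      ↔ Integrable g (P.map X) := (integrable_map_measure hg hX).symm
    _ ↔ Integrable (fun x ↦ (ENNReal.ofReal (p x)).toReal • g x) μ := by
        rw [hlaw, integrable_withDensity_iff_integrable_smul₀' hp.ennreal_ofReal (by simp)]
    _ ↔ Integrable (fun x ↦ p x • g x) μ := integrable_congr hsmul

lemma integral_comp_eq_integral_density_smul (hX : AEMeasurable X P) (hp : AEMeasurable p μ)
    (hp0 : 0 ≤ᵐ[μ] p) (hlaw : P.map X = μ.withDensity fun x ↦ ENNReal.ofReal (p x)) {g : α → F}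
    (hg : AEStronglyMeasurable g (P.map X)) :
    ∫ ω, g (X ω) ∂P = ∫ x, p x • g x ∂μ := by
  rw [← integral_map hX hg, hlaw,
    integral_withDensity_eq_integral_toReal_smul₀ hp.ennreal_ofReal (by simp)]
  exact integral_congr_ae (hp0.mono fun x hx ↦ by simp only [ENNReal.toReal_ofReal hx])

lemma integrable_density [IsFiniteMeasure P] (hX : AEMeasurable X P) (hp : AEMeasurable p μ)
    (hp0 : 0 ≤ᵐ[μ] p) (hlaw : P.map X = μ.withDensity fun x ↦ ENNReal.ofReal (p x)) :
    Integrable p μ := by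
  simpa using (integrable_comp_iff_integrable_density_smul hX hp hp0 hlaw
    (aestronglyMeasurable_const (b := (1 : ℝ)))).1 (integrable_const 1)

lemma integral_density (hX : AEMeasurable X P) (hp : AEMeasurable p μ)
    (hp0 : 0 ≤ᵐ[μ] p) (hlaw : P.map X = μ.withDensity fun x ↦ ENNReal.ofReal (p x)) :
    ∫ x, p x ∂μ = P.real Set.univ := by
  simpa using (integral_comp_eq_integral_density_smul hX hp hp0 hlaw
    (aestronglyMeasurable_const (b := (1 : ℝ)))).symm

lemma mul_log_le_mul_log_add_sub {a b : ℝ} (ha : 0 ≤ a) (hb : 0 < b) :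
    a * log b ≤ a * log a + (b - a) := by
  rcases ha.eq_or_lt with rfl | ha
  · simpa using hb.le
  calc a * log b = a * log a + a * log (b / a) := by
        rw [Real.log_div hb.ne' ha.ne']
        ring
    _ ≤ a * log a + a * (b / a - 1) := by
        gcongr
        exact Real.log_le_sub_one_of_pos (div_pos hb ha)
    _ = a * log a + (b - a) := by field_simp

lemma integral_mul_log_le_integral_mul_log_self {q : α → ℝ} (hp0 : 0 ≤ᵐ[μ] p)
    (hq0 : ∀ᵐ x ∂μ, 0 < q x) (hp : Integrable p μ) (hq : Integrable q μ)
    (hplogp : Integrable (fun x ↦ p x * log (p x)) μ)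
    (hplogq : Integrable (fun x ↦ p x * log (q x)) μ) (hmass : ∫ x, q x ∂μ ≤ ∫ x, p x ∂μ) :
    ∫ x, p x * log (q x) ∂μ ≤ ∫ x, p x * log (p x) ∂μ := by
  have hqp : Integrable (fun x ↦ q x - p x) μ := hq.sub hp
  have hpointwise : ∀ᵐ x ∂μ, p x * log (q x) ≤ p x * log (p x) + (q x - p x) := by
    filter_upwards [hp0, hq0] with x hpx hqx using mul_log_le_mul_log_add_sub hpx hqx
  calc ∫ x, p x * log (q x) ∂μ ≤ ∫ x, p x * log (p x) + (q x - p x) ∂μ :=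
        integral_mono_ae hplogq (hplogp.add hqp) hpointwise
    _ = (∫ x, p x * log (p x) ∂μ) + ((∫ x, q x ∂μ) - ∫ x, p x ∂μ) := by
        rw [integral_add hplogp hqp, integral_sub hq hp]
    _ ≤ ∫ x, p x * log (p x) ∂μ := by linarith

end Density

theorem stmt8_general {Ω E : Type*} [MeasurableSpace Ω] {P : Measure Ω} [IsProbabilityMeasure P]
    [NormedAddCommGroup E] [NormedSpace ℝ E] [MeasurableSpace E] [BorelSpace E] {μ : Measure E}
    {U V : Ω → E} (hU : MemLp U 2 P) (hV : MemLp V 2 P) {pU pV : E → ℝ}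
    (hlawU : P.map U = μ.withDensity fun x ↦ ENNReal.ofReal (pU x))
    (hlawV : P.map V = μ.withDensity fun x ↦ ENNReal.ofReal (pV x))
    (hpU : AEMeasurable pU μ) (hpU0 : 0 ≤ᵐ[μ] pU) {c₁ c₂ : ℝ} (hc₁ : 0 ≤ c₁)
    (hpV0 : ∀ x, 0 < pV x) (hpV : Differentiable ℝ pV)
    (hreg : ∀ x, ‖fderiv ℝ (fun y ↦ log (pV y)) x‖ ≤ c₁ * ‖x‖ + c₂)
    (hentU : Integrable (fun x ↦ pU x * log (pU x)) μ) :
    (-∫ x, pU x * log (pU x) ∂μ) - (-∫ x, pV x * log (pV x) ∂μ) ≤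
      (c₁ / 2 * √(∫ ω, ‖U ω‖ ^ 2 ∂P) + c₁ / 2 * √(∫ ω, ‖V ω‖ ^ 2 ∂P) + c₂) *
        √(∫ ω, ‖U ω - V ω‖ ^ 2 ∂P) := by
  have hUm : AEMeasurable U P := hU.aestronglyMeasurable.aemeasurable
  have hVm : AEMeasurable V P := hV.aestronglyMeasurable.aemeasurable
  have hpVm : AEMeasurable pV μ := hpV.continuous.measurable.aemeasurable
  have hpV0' : 0 ≤ᵐ[μ] pV := .of_forall fun x ↦ (hpV0 x).le
  have hlog : Differentiable ℝ fun x ↦ log (pV x) := hpV.log fun x ↦ (hpV0 x).ne'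
  have hlogm : Measurable fun x ↦ log (pV x) := hlog.continuous.measurable
  have hcross : ∫ ω, log (pV (U ω)) ∂P = ∫ x, pU x * log (pV x) ∂μ :=
    integral_comp_eq_integral_density_smul hUm hpU hpU0 hlawU hlogm.aestronglyMeasurable
  have hentV : ∫ ω, log (pV (V ω)) ∂P = ∫ x, pV x * log (pV x) ∂μ :=
    integral_comp_eq_integral_density_smul hVm hpVm hpV0' hlawV hlogm.aestronglyMeasurable
  have hcross_int : Integrable (fun x ↦ pU x * log (pV x)) μ :=
    (integrable_comp_iff_integrable_density_smul hUm hpU hpU0 hlawU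
      hlogm.aestronglyMeasurable).1 (integrable_comp_of_norm_fderiv_le_affine hc₁ hlog hreg hU)
  have gibbs : ∫ x, pU x * log (pV x) ∂μ ≤ ∫ x, pU x * log (pU x) ∂μ :=
    integral_mul_log_le_integral_mul_log_self hpU0 (.of_forall hpV0)
      (integrable_density hUm hpU hpU0 hlawU) (integrable_density hVm hpVm hpV0' hlawV) hentU
      hcross_int ((integral_density hVm hpVm hpV0' hlawV).trans
        (integral_density hUm hpU hpU0 hlawU).symm).le
  have htransport :=
    norm_integral_comp_sub_integral_comp_le_of_norm_fderiv_le_affine hc₁ hlog hreg hU hV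
  rw [hcross, hentV] at htransport
  linarith [(abs_le.1 htransport).1]

theorem stmt8 {Ω : Type*} [MeasurableSpace Ω] (P : Measure Ω) [IsProbabilityMeasure P]
    {n : ℕ} (U V : Ω → EuclideanSpace ℝ (Fin n)) (hU : Measurable U) (hV : Measurable V)
    (hU2 : Integrable (fun ω => ‖U ω‖ ^ 2) P) (hV2 : Integrable (fun ω => ‖V ω‖ ^ 2) P)
    (pU pV : EuclideanSpace ℝ (Fin n) → ℝ)
    (hlawU : Measure.map U P = volume.withDensity fun x => ENNReal.ofReal (pU x))
    (hlawV : Measure.map V P = volume.withDensity fun x => ENNReal.ofReal (pV x))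
    (hdensU : IsDensity pU)
    (c₁ c₂ : ℝ) (hc₁ : 0 < c₁) (hc₂ : 0 ≤ c₂) (hreg : IsRegularDensity c₁ c₂ pV)
    (hentU : Integrable fun x : EuclideanSpace ℝ (Fin n) => pU x * Real.log (pU x))
    (hentV : Integrable fun x : EuclideanSpace ℝ (Fin n) => pV x * Real.log (pV x)) :
    (-∫ x, pU x * Real.log (pU x)) - (-∫ x, pV x * Real.log (pV x)) ≤
      (c₁ / 2 * Real.sqrt (∫ ω, ‖U ω‖ ^ 2 ∂P) + c₁ / 2 * Real.sqrt (∫ ω, ‖V ω‖ ^ 2 ∂P) + c₂)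
        * Real.sqrt (∫ ω, ‖U ω - V ω‖ ^ 2 ∂P) :=
  stmt8_general ((memLp_two_iff_integrable_sq_norm hU.aestronglyMeasurable).2 hU2)
    ((memLp_two_iff_integrable_sq_norm hV.aestronglyMeasurable).2 hV2) hlawU hlawV
    hdensU.2.1.aemeasurable (.of_forall hdensU.1) hc₁.le hreg.1 hreg.2.1
    (fun x ↦ by simpa [gradient] using hreg.2.2 x) hentU

end
end

section
/- Let H^n and X^n be centered random vectors in ℝ^n with E[(H_k)²] = r_H(0) and E[(X_k)²] = r_X(0) for every coordinate k, and suppose H^n and X^n are independent, and let Z^n ∼ N(0, σ_Z²·I_n) with σ_Z² > 0 be independent of (H^n, X^n). Then E[‖H^n ⊙ X^n‖] ≤ √(n·r_H(0)·r_X(0)), and consequently the density of Y^n = H^n ⊙ X^n + Z^n is (c1,c2)-regular with c1 = 3/σ_Z² and c2 = (4/σ_Z²)·√(n·r_H(0)·r_X(0)). -/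
open MeasureTheory Real ProbabilityTheory
open scoped BigOperators ENNReal

noncomputable section
open MeasureTheory Real ProbabilityTheory

/-!
Write `W = H ⊙ X`. Independence gives `E‖W‖² = ∑ₖ E[Hₖ²] E[Xₖ²]`, and Jensen's inequality bounds
`E‖W‖`. The law of `W + Z` has density proportional to `p(y) = E[exp(-‖y - W‖² / (2σ²))]`, and
differentiating under the expectation gives
`‖∇p(y)‖ ≤ σ⁻² E[‖y - W‖ exp(-‖y - W‖² / (2σ²))]`. The Gaussian factor is a decreasing function of
`‖y - W‖`, so Chebyshev's association inequality bounds the last expectation by `E‖y - W‖ · p(y)`;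
hence `‖∇ log p(y)‖ ≤ (‖y‖ + E‖W‖) / σ²`, which is stronger than the claimed regularity.
-/

section Moments

variable {Ω : Type*} [MeasurableSpace Ω] {P : Measure Ω} [IsProbabilityMeasure P]

lemma integral_norm_le_sqrt_integral_norm_sq_s13 {F : Type*} [NormedAddCommGroup F] {f : Ω → F}
    (hf : MemLp f 2 P) : ∫ ω, ‖f ω‖ ∂P ≤ √(∫ ω, ‖f ω‖ ^ 2 ∂P) := by
  have hvar := variance_nonneg (fun ω => ‖f ω‖) P
  rw [variance_eq_sub hf.norm, sub_nonneg] at hvar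
  exact Real.le_sqrt_of_sq_le hvar

lemma integral_mul_le_integral_mul_integral_of_antivary {f g : Ω → ℝ} (hfg : Antivary f g)
    (hf : Integrable f P) (hg : Integrable g P) (hmul : Integrable (fun ω => f ω * g ω) P) :
    ∫ ω, f ω * g ω ∂P ≤ (∫ ω, f ω ∂P) * ∫ ω, g ω ∂P := by
  have hpair (ω ω' : Ω) : f ω * g ω + f ω' * g ω' ≤ f ω * g ω' + g ω * f ω' := by
    linarith [antivary_iff_forall_mul_nonpos.1 hfg ω ω']
  have hleft (ω : Ω) :
      f ω * g ω + ∫ ω', f ω' * g ω' ∂P ≤ f ω * ∫ ω', g ω' ∂P + g ω * ∫ ω', f ω' ∂P := by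
    have h := integral_mono ((integrable_const _).add hmul)
      ((hg.const_mul (f ω)).add (hf.const_mul (g ω))) (hpair ω)
    simpa only [Pi.add_apply, integral_add (integrable_const _) hmul, integral_const,
      probReal_univ, one_smul, integral_add (hg.const_mul _) (hf.const_mul _),
      integral_const_mul] using h
  have h := integral_mono (hmul.add (integrable_const _))
    ((hf.mul_const _).add (hg.mul_const _)) hleft
  simp only [Pi.add_apply, integral_add hmul (integrable_const _), integral_const, probReal_univ,
    one_smul, integral_add (hf.mul_const _) (hg.mul_const _), integral_mul_const] at h
  linarith

end Moments

section Hadamard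

variable {Ω : Type*} [MeasurableSpace Ω] {P : Measure Ω} {n : ℕ}

lemma indepFun_sq {f g : Ω → ℝ} (hfg : IndepFun f g P) :
    IndepFun (fun ω => f ω ^ 2) (fun ω => g ω ^ 2) P :=
  hfg.comp (φ := (· ^ 2)) (ψ := (· ^ 2)) (by fun_prop) (by fun_prop)

lemma integrable_sq_mul_sq {f g : Ω → ℝ} (hfg : IndepFun f g P)
    (hf : Integrable (fun ω => f ω ^ 2) P) (hg : Integrable (fun ω => g ω ^ 2) P) :
    Integrable (fun ω => f ω ^ 2 * g ω ^ 2) P :=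
  (indepFun_sq hfg).integrable_mul hf hg

lemma norm_sq_hadamard (u v : EuclideanSpace ℝ (Fin n)) :
    ‖hadamard u v‖ ^ 2 = ∑ k, u k ^ 2 * v k ^ 2 := by
  simp [EuclideanSpace.norm_sq_eq, hadamard, mul_pow]

variable {H X : Ω → EuclideanSpace ℝ (Fin n)}

lemma measurable_hadamard (hHm : Measurable H) (hXm : Measurable X) :
    Measurable fun ω => hadamard (H ω) (X ω) :=
  (WithLp.measurable_toLp 2 (Fin n → ℝ)).comp (measurable_pi_lambda _ fun k => by fun_prop)

lemma indepFun_coord (hHX : IndepFun H X P) (k : Fin n) :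
    IndepFun (fun ω => H ω k) (fun ω => X ω k) P :=
  hHX.comp (φ := fun u : EuclideanSpace ℝ (Fin n) => u k)
    (ψ := fun u : EuclideanSpace ℝ (Fin n) => u k) (by fun_prop) (by fun_prop)

lemma integral_norm_sq_hadamard (hHX : ∀ k, IndepFun (fun ω => H ω k) (fun ω => X ω k) P)
    (hH : ∀ k, Integrable (fun ω => H ω k ^ 2) P) (hX : ∀ k, Integrable (fun ω => X ω k ^ 2) P) :
    ∫ ω, ‖hadamard (H ω) (X ω)‖ ^ 2 ∂P = ∑ k, (∫ ω, H ω k ^ 2 ∂P) * ∫ ω, X ω k ^ 2 ∂P := by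
  simp only [norm_sq_hadamard]
  rw [integral_finsetSum _ fun k _ => integrable_sq_mul_sq (hHX k) (hH k) (hX k)]
  exact Finset.sum_congr rfl fun k _ => (indepFun_sq (hHX k)).integral_fun_mul_eq_mul_integral
    (hH k).aestronglyMeasurable (hX k).aestronglyMeasurable

lemma memLp_two_hadamard (hHm : Measurable H) (hXm : Measurable X)
    (hHX : ∀ k, IndepFun (fun ω => H ω k) (fun ω => X ω k) P)
    (hH : ∀ k, Integrable (fun ω => H ω k ^ 2) P) (hX : ∀ k, Integrable (fun ω => X ω k ^ 2) P) :
    MemLp (fun ω => hadamard (H ω) (X ω)) 2 P := by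
  rw [memLp_two_iff_integrable_sq_norm (measurable_hadamard hHm hXm).aestronglyMeasurable]
  simp only [norm_sq_hadamard]
  exact integrable_finsetSum _ fun k _ => integrable_sq_mul_sq (hHX k) (hH k) (hX k)

end Hadamard

section GaussianKernel

variable {E : Type*} [NormedAddCommGroup E] {v : ℝ}

/-- The Gaussian kernel of variance `v`, normalised to be `1` at the origin: without the factor
`(2πv) ^ (-n/2)`, which `∇ log` does not see, it makes sense in any normed space. -/
def gaussianKernel (v : ℝ) (x : E) : ℝ :=
  exp (-‖x‖ ^ 2 / (2 * v))

lemma gaussianKernel_pos (v : ℝ) (x : E) : 0 < gaussianKernel v x :=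
  exp_pos _

lemma continuous_gaussianKernel (v : ℝ) : Continuous (gaussianKernel v : E → ℝ) := by
  unfold gaussianKernel
  fun_prop

lemma gaussianKernel_le_of_norm_le (hv : 0 ≤ v) {x y : E} (hxy : ‖x‖ ≤ ‖y‖) :
    gaussianKernel v y ≤ gaussianKernel v x := by
  unfold gaussianKernel
  gcongr

lemma gaussianKernel_le_one (hv : 0 ≤ v) (x : E) : gaussianKernel v x ≤ 1 := by
  simpa [gaussianKernel] using gaussianKernel_le_of_norm_le hv (x := (0 : E)) (y := x) (by simp)

lemma gaussianKernel_mul_norm_le (hv : 0 < v) (x : E) : gaussianKernel v x * ‖x‖ ≤ 1 + v := by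
  have hexp : 1 + ‖x‖ ^ 2 / (2 * v) ≤ exp (‖x‖ ^ 2 / (2 * v)) := by
    linarith [add_one_le_exp (‖x‖ ^ 2 / (2 * v))]
  have hnorm : ‖x‖ ≤ (1 + v) * (1 + ‖x‖ ^ 2 / (2 * v)) := by
    have : (1 + v) * (1 + ‖x‖ ^ 2 / (2 * v)) - ‖x‖
        = ((‖x‖ - 1) ^ 2 + 1) / 2 + v + ‖x‖ ^ 2 / (2 * v) := by
      field_simp
      ring
    have : 0 ≤ ((‖x‖ - 1) ^ 2 + 1) / 2 + v + ‖x‖ ^ 2 / (2 * v) := by positivity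
    linarith
  rw [gaussianKernel, neg_div, exp_neg, inv_mul_le_iff₀ (exp_pos _), mul_comm]
  exact hnorm.trans (by gcongr)

variable [InnerProductSpace ℝ E]

lemma hasFDerivAt_gaussianKernel (v : ℝ) (x : E) :
    HasFDerivAt (gaussianKernel v) (-(gaussianKernel v x / v) • innerSL ℝ x) x := by
  have h := ((hasFDerivAt_id x).norm_sq.neg.mul_const (2 * v)⁻¹).exp
  simp only [id, ← div_eq_mul_inv] at h
  refine h.congr_fderiv ?_
  ext u
  simp only [gaussianKernel, mul_inv_rev, ContinuousLinearMap.comp_id, smul_neg, neg_smul,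
    neg_apply, Pi.neg_apply, smul_apply, coe_innerSL_apply, nsmul_eq_mul, Nat.cast_ofNat,
    smul_eq_mul, neg_inj]
  field_simp

lemma norm_smul_innerSL_gaussianKernel (hv : 0 ≤ v) (x : E) :
    ‖-(gaussianKernel v x / v) • innerSL ℝ x‖ = gaussianKernel v x * ‖x‖ / v := by
  rw [norm_smul, innerSL_apply_norm, norm_neg,
    Real.norm_of_nonneg (div_nonneg (gaussianKernel_pos v x).le hv), div_mul_eq_mul_div]

end GaussianKernel

section GaussianSmoothing

variable {E : Type*} [NormedAddCommGroup E] [MeasurableSpace E] {μ : Measure E} {v : ℝ}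

/-- The convolution of `μ` with the Gaussian kernel of variance `v`; up to the normalising
constant, the density of the sum of a random vector of law `μ` and independent Gaussian noise of
variance `v` in each direction. -/
def gaussianSmoothing (μ : Measure E) (v : ℝ) (y : E) : ℝ :=
  ∫ w, gaussianKernel v (y - w) ∂μ

section FiniteMeasure

variable [OpensMeasurableSpace E] [IsFiniteMeasure μ]

lemma integrable_gaussianKernel_sub (hv : 0 ≤ v) (y : E) :
    Integrable (fun w => gaussianKernel v (y - w)) μ := by
  have hcont : Continuous fun w : E => gaussianKernel v (y - w) :=
    (continuous_gaussianKernel v).comp (by fun_prop)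
  refine .of_bound hcont.aestronglyMeasurable 1 (.of_forall fun w => ?_)
  rw [Real.norm_of_nonneg (gaussianKernel_pos _ _).le]
  exact gaussianKernel_le_one hv _

lemma integrable_gaussianKernel_sub_mul_norm (hv : 0 < v) (y : E) :
    Integrable (fun w => gaussianKernel v (y - w) * ‖y - w‖) μ := by
  have hcont : Continuous fun w : E => gaussianKernel v (y - w) * ‖y - w‖ :=
    ((continuous_gaussianKernel v).comp (by fun_prop)).mul (by fun_prop)
  refine .of_bound hcont.aestronglyMeasurable (1 + v) (.of_forall fun w => ?_)
  rw [Real.norm_of_nonneg (mul_nonneg (gaussianKernel_pos _ _).le (norm_nonneg _))]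
  exact gaussianKernel_mul_norm_le hv _

lemma integrable_norm_sub (hμ : Integrable (fun w => ‖w‖) μ) (y : E) :
    Integrable (fun w => ‖y - w‖) μ :=
  ((integrable_const ‖y‖).add hμ).mono' (by fun_prop : Continuous _).aestronglyMeasurable
    (.of_forall fun w => by simpa using norm_sub_le y w)

lemma gaussianSmoothing_pos [NeZero μ] (hv : 0 ≤ v) (y : E) : 0 < gaussianSmoothing μ v y :=
  integral_exp_pos (integrable_gaussianKernel_sub hv y)

lemma hasFDerivAt_gaussianSmoothing [InnerProductSpace ℝ E] [SecondCountableTopology E]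
    (hv : 0 < v) (y : E) :
    HasFDerivAt (gaussianSmoothing μ v)
      (∫ w, -(gaussianKernel v (y - w) / v) • innerSL ℝ (y - w) ∂μ) y := by
  have hcont : Continuous fun w : E => -(gaussianKernel v (y - w) / v) • innerSL ℝ (y - w) :=
    (((continuous_gaussianKernel v).comp (by fun_prop)).div_const v).neg.smul (by fun_prop)
  refine hasFDerivAt_integral_of_dominated_of_fderiv_le
    (F' := fun x w => -(gaussianKernel v (x - w) / v) • innerSL ℝ (x - w))
    (bound := fun _ => (1 + v) / v)
    Filter.univ_mem (.of_forall fun x => (integrable_gaussianKernel_sub hv.le x).1)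
    (integrable_gaussianKernel_sub hv.le y) hcont.aestronglyMeasurable
    (.of_forall fun w x _ => ?_) (integrable_const _) (.of_forall fun w x _ => ?_)
  · rw [norm_smul_innerSL_gaussianKernel hv.le]
    gcongr
    exact gaussianKernel_mul_norm_le hv _
  · exact (hasFDerivAt_gaussianKernel v (x - w)).comp x ((hasFDerivAt_id x).sub_const w)

end FiniteMeasure

section ProbabilityMeasure

variable [OpensMeasurableSpace E] [IsProbabilityMeasure μ]

lemma integral_norm_sub_le (hμ : Integrable (fun w => ‖w‖) μ) (y : E) :
    ∫ w, ‖y - w‖ ∂μ ≤ ‖y‖ + ∫ w, ‖w‖ ∂μ := by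
  calc ∫ w, ‖y - w‖ ∂μ ≤ ∫ w, (‖y‖ + ‖w‖) ∂μ :=
        integral_mono (integrable_norm_sub hμ y) ((integrable_const _).add hμ)
          fun w => norm_sub_le y w
    _ = ‖y‖ + ∫ w, ‖w‖ ∂μ := by simp [integral_add (integrable_const _) hμ]

lemma integral_gaussianKernel_sub_mul_norm_le (hv : 0 < v) (hμ : Integrable (fun w => ‖w‖) μ)
    (y : E) :
    ∫ w, gaussianKernel v (y - w) * ‖y - w‖ ∂μ
      ≤ gaussianSmoothing μ v y * (‖y‖ + ∫ w, ‖w‖ ∂μ) := by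
  have hanti : Antivary (fun w => gaussianKernel v (y - w)) fun w => ‖y - w‖ :=
    fun _ _ h => gaussianKernel_le_of_norm_le hv.le h.le
  calc ∫ w, gaussianKernel v (y - w) * ‖y - w‖ ∂μ
      ≤ gaussianSmoothing μ v y * ∫ w, ‖y - w‖ ∂μ :=
        integral_mul_le_integral_mul_integral_of_antivary hanti
          (integrable_gaussianKernel_sub hv.le y) (integrable_norm_sub hμ y)
          (integrable_gaussianKernel_sub_mul_norm hv y)
    _ ≤ gaussianSmoothing μ v y * (‖y‖ + ∫ w, ‖w‖ ∂μ) := by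
        have := gaussianSmoothing_pos (μ := μ) hv.le y
        gcongr
        exact integral_norm_sub_le hμ y

variable [InnerProductSpace ℝ E] [SecondCountableTopology E]

lemma norm_fderiv_gaussianSmoothing_le (hv : 0 < v) (hμ : Integrable (fun w => ‖w‖) μ) (y : E) :
    ‖fderiv ℝ (gaussianSmoothing μ v) y‖
      ≤ gaussianSmoothing μ v y * ((‖y‖ + ∫ w, ‖w‖ ∂μ) / v) := by
  calc ‖fderiv ℝ (gaussianSmoothing μ v) y‖
      = ‖∫ w, -(gaussianKernel v (y - w) / v) • innerSL ℝ (y - w) ∂μ‖ := by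
        rw [(hasFDerivAt_gaussianSmoothing hv y).fderiv]
    _ ≤ ∫ w, ‖-(gaussianKernel v (y - w) / v) • innerSL ℝ (y - w)‖ ∂μ :=
        norm_integral_le_integral_norm _
    _ = (∫ w, gaussianKernel v (y - w) * ‖y - w‖ ∂μ) / v := by
        simp only [norm_smul_innerSL_gaussianKernel hv.le, integral_div]
    _ ≤ gaussianSmoothing μ v y * (‖y‖ + ∫ w, ‖w‖ ∂μ) / v := by
        gcongr
        exact integral_gaussianKernel_sub_mul_norm_le hv hμ y
    _ = gaussianSmoothing μ v y * ((‖y‖ + ∫ w, ‖w‖ ∂μ) / v) := mul_div_assoc _ _ _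

lemma norm_gradient_log_gaussianSmoothing_le [CompleteSpace E] (hv : 0 < v)
    (hμ : Integrable (fun w => ‖w‖) μ) (y : E) :
    ‖gradient (fun y => log (gaussianSmoothing μ v y)) y‖ ≤ (‖y‖ + ∫ w, ‖w‖ ∂μ) / v := by
  have hpos := gaussianSmoothing_pos (μ := μ) hv.le y
  have hdiff := (hasFDerivAt_gaussianSmoothing (μ := μ) hv y).differentiableAt
  rw [gradient, LinearIsometryEquiv.norm_map, fderiv.log hdiff hpos.ne', norm_smul, norm_inv,
    Real.norm_of_nonneg hpos.le, inv_mul_le_iff₀ hpos]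
  exact norm_fderiv_gaussianSmoothing_le hv hμ y

end ProbabilityMeasure

end GaussianSmoothing

section RegularDensity

variable {n : ℕ}

lemma IsRegularDensity.mono {c₁ c₂ d₁ d₂ : ℝ} {f : EuclideanSpace ℝ (Fin n) → ℝ}
    (hf : IsRegularDensity c₁ c₂ f) (h₁ : c₁ ≤ d₁) (h₂ : c₂ ≤ d₂) : IsRegularDensity d₁ d₂ f :=
  ⟨hf.1, hf.2.1, fun x => (hf.2.2 x).trans (by gcongr)⟩

lemma IsRegularDensity.const_mul {c₁ c₂ a : ℝ} {f : EuclideanSpace ℝ (Fin n) → ℝ} (ha : 0 < a)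
    (hf : IsRegularDensity c₁ c₂ f) : IsRegularDensity c₁ c₂ fun x => a * f x := by
  obtain ⟨hpos, hdiff, hgrad⟩ := hf
  have hlog : (fun y => log (a * f y)) = fun y => log a + log (f y) :=
    funext fun y => log_mul ha.ne' (hpos y).ne'
  refine ⟨fun x => mul_pos ha (hpos x), hdiff.const_mul a, fun x => ?_⟩
  rw [hlog, gradient, fderiv_const_add]
  exact hgrad x

lemma isRegularDensity_gaussianSmoothing {μ : Measure (EuclideanSpace ℝ (Fin n))}
    [IsProbabilityMeasure μ] {v : ℝ} (hv : 0 < v) (hμ : Integrable (fun w => ‖w‖) μ) :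
    IsRegularDensity (1 / v) (1 / v * ∫ w, ‖w‖ ∂μ) (gaussianSmoothing μ v) := by
  refine ⟨gaussianSmoothing_pos hv.le,
    fun y => (hasFDerivAt_gaussianSmoothing hv y).differentiableAt, fun y => ?_⟩
  rw [← mul_add, one_div_mul_eq_div]
  exact norm_gradient_log_gaussianSmoothing_le hv hμ y

end RegularDensity

section Law

lemma conv_withDensity {G : Type*} [AddGroup G] [MeasurableSpace G] [MeasurableAdd₂ G]
    [MeasurableNeg G] (μ ν : Measure G) [SFinite μ] [SFinite ν] [ν.IsAddLeftInvariant]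
    {g : G → ℝ≥0∞} (hg : Measurable g) :
    μ ∗ ν.withDensity g = ν.withDensity fun y => ∫⁻ w, g (-w + y) ∂μ := by
  refine Measure.ext_of_lintegral _ fun φ hφ => ?_
  have hmeas : Measurable fun y => ∫⁻ w, g (-w + y) ∂μ :=
    Measurable.lintegral_prod_left' (f := fun p : G × G => g (-p.1 + p.2)) (by fun_prop)
  calc ∫⁻ y, φ y ∂(μ ∗ ν.withDensity g)
      = ∫⁻ w, ∫⁻ z, g z * φ (w + z) ∂ν ∂μ := by
        rw [Measure.lintegral_conv hφ]
        exact lintegral_congr fun w =>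
          lintegral_withDensity_eq_lintegral_mul ν hg (hφ.comp (measurable_const_add w))
    _ = ∫⁻ w, ∫⁻ y, g (-w + y) * φ y ∂ν ∂μ :=
        lintegral_congr fun w => by
          rw [← lintegral_add_left_eq_self _ (-w)]
          simp only [add_neg_cancel_left]
    _ = ∫⁻ y, ∫⁻ w, g (-w + y) * φ y ∂μ ∂ν :=
        lintegral_lintegral_swap (by fun_prop)
    _ = ∫⁻ y, (∫⁻ w, g (-w + y) ∂μ) * φ y ∂ν :=
        lintegral_congr fun y => lintegral_mul_const _ (by fun_prop)
    _ = ∫⁻ y, φ y ∂ν.withDensity fun y => ∫⁻ w, g (-w + y) ∂μ :=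
        (lintegral_withDensity_eq_lintegral_mul ν hmeas hφ).symm

lemma isoGaussDensity_eq {n : ℕ} (v : ℝ) (x : EuclideanSpace ℝ (Fin n)) :
    isoGaussDensity n v x = (2 * π * v) ^ (-(n : ℝ) / 2) * gaussianKernel v x :=
  rfl

lemma conv_isoGaussDensity {n : ℕ} (μ : Measure (EuclideanSpace ℝ (Fin n))) [IsFiniteMeasure μ]
    {v : ℝ} (hv : 0 ≤ v) :
    μ ∗ volume.withDensity (fun x => ENNReal.ofReal (isoGaussDensity n v x))
      = volume.withDensity fun y =>
          ENNReal.ofReal ((2 * π * v) ^ (-(n : ℝ) / 2) * gaussianSmoothing μ v y) := by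
  have hmeas : Measurable (isoGaussDensity n v) :=
    ((continuous_gaussianKernel v).const_mul _).measurable
  rw [conv_withDensity _ _ hmeas.ennreal_ofReal]
  congr 1 with y
  have hC : 0 ≤ (2 * π * v) ^ (-(n : ℝ) / 2) := by positivity
  rw [gaussianSmoothing, ← integral_const_mul, ofReal_integral_eq_lintegral_ofReal
    ((integrable_gaussianKernel_sub hv y).const_mul _)
    (.of_forall fun w => mul_nonneg hC (gaussianKernel_pos _ _).le)]
  simp only [neg_add_eq_sub, isoGaussDensity_eq]

lemma exists_isRegularDensity_map_add_gaussian {Ω : Type*} [MeasurableSpace Ω] {P : Measure Ω}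
    [IsProbabilityMeasure P] {n : ℕ} {W Z : Ω → EuclideanSpace ℝ (Fin n)} (hW : Measurable W)
    (hWint : Integrable W P) (hZ : Measurable Z) {v : ℝ} (hv : 0 < v)
    (hZlaw : P.map Z = volume.withDensity fun x => ENNReal.ofReal (isoGaussDensity n v x))
    (hWZ : IndepFun W Z P) :
    ∃ p : EuclideanSpace ℝ (Fin n) → ℝ,
      P.map (fun ω => W ω + Z ω) = volume.withDensity (fun x => ENNReal.ofReal (p x)) ∧
        IsRegularDensity (1 / v) (1 / v * ∫ ω, ‖W ω‖ ∂P) p := by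
  have hprob := Measure.isProbabilityMeasure_map (μ := P) hW.aemeasurable
  have hint : Integrable (fun w => ‖w‖) (P.map W) :=
    (integrable_map_measure (by fun_prop) hW.aemeasurable).2 hWint.norm
  have hreg := isRegularDensity_gaussianSmoothing hv hint
  rw [integral_map hW.aemeasurable (by fun_prop)] at hreg
  have hconst : 0 < (2 * π * v) ^ (-(n : ℝ) / 2) := by positivity
  refine ⟨_, ?_, hreg.const_mul hconst⟩
  rw [← conv_isoGaussDensity _ hv.le, ← hZlaw]
  exact hWZ.map_add_eq_map_conv_map hW hZ

end Law

theorem stmt13_general {Ω : Type*} [MeasurableSpace Ω] (P : Measure Ω) [IsProbabilityMeasure P]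
    {n : ℕ} (H X Z : Ω → EuclideanSpace ℝ (Fin n))
    (hH : Measurable H) (hX : Measurable X) (hZ : Measurable Z)
    (rH rX : Fin n → ℝ)
    (hHint : ∀ k, Integrable (fun ω => (H ω k) ^ 2) P)
    (hXint : ∀ k, Integrable (fun ω => (X ω k) ^ 2) P)
    (hH2 : ∀ k, ∫ ω, (H ω k) ^ 2 ∂P = rH k) (hX2 : ∀ k, ∫ ω, (X ω k) ^ 2 ∂P = rX k)
    (hHX : ∀ k, IndepFun (fun ω => H ω k) (fun ω => X ω k) P)
    (σ2 : ℝ) (hσ2 : 0 < σ2)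
    (hZlaw : Measure.map Z P = volume.withDensity fun x => ENNReal.ofReal (isoGaussDensity n σ2 x))
    (hZindep : IndepFun (fun ω => hadamard (H ω) (X ω)) Z P) :
    (∫ ω, ‖hadamard (H ω) (X ω)‖ ∂P ≤ √(∑ k, rH k * rX k)) ∧
      ∃ pY : EuclideanSpace ℝ (Fin n) → ℝ,
        Measure.map (fun ω => hadamard (H ω) (X ω) + Z ω) P
            = volume.withDensity (fun x => ENNReal.ofReal (pY x)) ∧
          IsRegularDensity (1 / σ2) (1 / σ2 * √(∑ k, rH k * rX k)) pY := by
  have hL2 : MemLp (fun ω => hadamard (H ω) (X ω)) 2 P :=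
    memLp_two_hadamard hH hX hHX hHint hXint
  have hmean : ∫ ω, ‖hadamard (H ω) (X ω)‖ ∂P ≤ √(∑ k, rH k * rX k) := by
    simpa only [integral_norm_sq_hadamard hHX hHint hXint, hH2, hX2]
      using integral_norm_le_sqrt_integral_norm_sq_s13 hL2
  obtain ⟨pY, hlaw, hreg⟩ := exists_isRegularDensity_map_add_gaussian
    (measurable_hadamard hH hX) (hL2.integrable one_le_two) hZ hσ2 hZlaw hZindep
  exact ⟨hmean, pY, hlaw, hreg.mono le_rfl (by gcongr)⟩

theorem stmt13 {Ω : Type*} [MeasurableSpace Ω] (P : Measure Ω) [IsProbabilityMeasure P]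
    {n : ℕ} (H X Z : Ω → EuclideanSpace ℝ (Fin n))
    (hH : Measurable H) (hX : Measurable X) (hZ : Measurable Z)
    (rH0 rX0 : ℝ)
    (hHmean : ∀ k, ∫ ω, H ω k ∂P = 0) (hXmean : ∀ k, ∫ ω, X ω k ∂P = 0)
    (hHint : ∀ k, Integrable (fun ω => (H ω k) ^ 2) P)
    (hXint : ∀ k, Integrable (fun ω => (X ω k) ^ 2) P)
    (hH2 : ∀ k, ∫ ω, (H ω k) ^ 2 ∂P = rH0) (hX2 : ∀ k, ∫ ω, (X ω k) ^ 2 ∂P = rX0)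
    (hHX : IndepFun H X P)
    (σ2 : ℝ) (hσ2 : 0 < σ2)
    (hZlaw : Measure.map Z P = volume.withDensity fun x => ENNReal.ofReal (isoGaussDensity n σ2 x))
    (hZindep : IndepFun (fun ω => (H ω, X ω)) Z P) :
    (∫ ω, ‖hadamard (H ω) (X ω)‖ ∂P ≤ Real.sqrt (n * rH0 * rX0)) ∧
      ∃ pY : EuclideanSpace ℝ (Fin n) → ℝ,
        Measure.map (fun ω => hadamard (H ω) (X ω) + Z ω) P
            = volume.withDensity (fun x => ENNReal.ofReal (pY x)) ∧
          IsRegularDensity (3 / σ2) (4 / σ2 * Real.sqrt (n * rH0 * rX0)) pY := by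
  obtain ⟨hmean, pY, hlaw, hreg⟩ := stmt13_general P H X Z hH hX hZ _ _ hHint hXint hH2 hX2
    (indepFun_coord hHX) σ2 hσ2 hZlaw
    (hZindep.comp (measurable_hadamard measurable_fst measurable_snd) measurable_id)
  simp only [Finset.sum_const, Finset.card_univ, Fintype.card_fin, nsmul_eq_mul, ← mul_assoc]
    at hmean hreg
  exact ⟨hmean, pY, hlaw, hreg.mono (by gcongr; norm_num) (by gcongr; norm_num)⟩

end
end
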